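/- For each fixed m ≥ 1, the sequence n ↦ β_{3(2m+1)2ⁿ} (n ≥ 0) is strictly decreasing and converges to β_c as n → ∞. -/

import Mathlib

open Filter Set

noncomputable section

namespace FatSierpinski

/-- The digit set Ω = {(0,0),(1,0),(0,1)} ⊆ ℝ². -/
def OmegaR : Set (ℝ × ℝ) := {(0, 0), (1, 0), (0, 1)}

/-- The fat Sierpinski gasket `S_β` (sequences are 0-indexed: `d i` is the digit d_{i+1}). -/
def Sfat (β : ℝ) : Set (ℝ × ℝ) :=
  {x | ∃ d : ℕ → ℝ × ℝ, (∀ i, d i ∈ OmegaR) ∧ x = ∑' i : ℕ, (β ^ (i + 1))⁻¹ • d i}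

/-- The convex hull `Δ_β` of `S_β`. -/
def Delta (β : ℝ) : Set (ℝ × ℝ) := convexHull ℝ (Sfat β)

/-- The map `f_d(x) = (x + d)/β`. -/
def fmap (β : ℝ) (d : ℝ × ℝ) (x : ℝ × ℝ) : ℝ × ℝ := β⁻¹ • (x + d)

/-- The overlap region `O_β = ⋃_{c ≠ d ∈ Ω} f_c(Δ_β) ∩ f_d(Δ_β)`. -/
def Ofat (β : ℝ) : Set (ℝ × ℝ) :=
  ⋃ c ∈ OmegaR, ⋃ d ∈ OmegaR, ⋃ (_ : c ≠ d), (fmap β c '' Delta β) ∩ (fmap β d '' Delta β)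

/-- The univoque set of codings `𝐔_β`. -/
def Ufat (β : ℝ) : Set (ℕ → ℝ × ℝ) :=
  {d | (∀ i, d i ∈ OmegaR) ∧
    ∀ n : ℕ, (∑' i : ℕ, (β ^ (i + 1))⁻¹ • d (n + i)) ∉ Ofat β}

/-- `d` has smallest period `k`. -/
def SmallestPeriod {α : Type*} (d : ℕ → α) (k : ℕ) : Prop :=
  0 < k ∧ (∀ i, d (i + k) = d i) ∧ ∀ j, 0 < j → j < k → ∃ i, d (i + j) ≠ d i

/-- The critical base `β_k`. -/
def betaK (k : ℕ) : ℝ :=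
  sInf {β : ℝ | β ∈ Set.Ioc (1 : ℝ) 2 ∧ ∃ d ∈ Ufat β, SmallestPeriod d k}

/-- Strict lexicographic order on sequences. -/
def seqLT {α : Type*} [Preorder α] (a b : ℕ → α) : Prop :=
  ∃ n, (∀ i < n, a i = b i) ∧ a n < b n

/-- Weak lexicographic order on sequences. -/
def seqLE {α : Type*} [Preorder α] (a b : ℕ → α) : Prop :=
  seqLT a b ∨ a = b

/-- `a` is a 0-1 sequence. -/
def IsBinary (a : ℕ → ℕ) : Prop := ∀ i, a i ≤ 1

/-- `a` does not end with `0^∞`. -/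
def NotEndInZeros (a : ℕ → ℕ) : Prop := ∀ N, ∃ i, N ≤ i ∧ a i ≠ 0

/-- `∑_{i=1}^∞ a_i β^{-i} = 1` (0-indexed: `a i` is a_{i+1}). -/
def SumsToOne (β : ℝ) (a : ℕ → ℕ) : Prop :=
  ∑' i : ℕ, (a i : ℝ) / β ^ (i + 1) = 1

/-- `a` is the quasi-greedy β-expansion of 1: the lexicographically largest
binary sequence not ending in `0^∞` whose value in base β is 1. -/
def IsQuasiGreedy (β : ℝ) (a : ℕ → ℕ) : Prop :=
  IsBinary a ∧ NotEndInZeros a ∧ SumsToOne β a ∧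
    ∀ b : ℕ → ℕ, IsBinary b → NotEndInZeros b → SumsToOne β b → seqLE b a

/-- `w⁺`: replace the final digit 0 of a block by 1. -/
def plusBlock (w : List ℕ) : List ℕ := w.dropLast ++ [1]

/-- `Θ` flips the outer digits of every consecutive triple
(000↦101, 001↦100, 100↦001, 101↦000). -/
def thetaBlock (w : List ℕ) : List ℕ :=
  w.mapIdx fun i x => if i % 3 = 1 then x else 1 - x

/-- `tB n` is the block `t_{n+1}`: `t_1 = 100`, `t_{n+1} = t_n⁺ Θ(t_n⁺)`. -/
def tB : ℕ → List ℕ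
  | 0 => [1, 0, 0]
  | n + 1 => plusBlock (tB n) ++ thetaBlock (plusBlock (tB n))

/-- The sequence `u w^∞` (the block `u` followed by `w` repeated forever). -/
def prefixPeriodic (u w : List ℕ) : ℕ → ℕ := fun i =>
  if i < u.length then u.getD i 0 else w.getD ((i - u.length) % w.length) 0

/-- The periodic sequence `w^∞`. -/
def periodicSeq (w : List ℕ) : ℕ → ℕ := fun i => w.getD (i % w.length) 0

/-- The componentwise limit `λ = 101001000101…` of the blocks `t_n`
(the digit `λ_{i+1}` has stabilized in `t_{i+2} = tB (i+1)`). -/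
def lamSeq : ℕ → ℕ := fun i => (tB (i + 1)).getD i 0

/-- `β_c` is the unique base in (1,2] with `∑ λ_i β^{-i} = 1`. -/
def IsBetaC (β : ℝ) : Prop := β ∈ Set.Ioc (1 : ℝ) 2 ∧ SumsToOne β lamSeq

/-- The sequence `t_{n+2}⁺ (Θ(t_{n+2}))^∞`, the quasi-greedy expansion of 1 for `β̂_n`. -/
def hatSeq (n : ℕ) : ℕ → ℕ :=
  prefixPeriodic (plusBlock (tB (n + 1))) (thetaBlock (tB (n + 1)))

/-- The Sharkovskii ordering `k ⊳ ℓ` on positive integers. -/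
def Sharkovskii (k l : ℕ) : Prop :=
  ∃ a b c d : ℕ, k = 2 ^ a * (2 * b + 1) ∧ l = 2 ^ c * (2 * d + 1) ∧ k ≠ l ∧
    ((1 ≤ b ∧ d = 0) ∨ (1 ≤ b ∧ 1 ≤ d ∧ (a < c ∨ (a = c ∧ b < d))) ∨
      (b = 0 ∧ d = 0 ∧ c < a))

/-- The digit set Ω as pairs of naturals (for combinatorial statements). -/
def OmegaD : Set (ℕ × ℕ) := {(0, 0), (1, 0), (0, 1)}

/-- The periodic extension `(d_1 … d_k)^∞` of a block. -/
def cyc (d : List (ℕ × ℕ)) : ℕ → ℕ × ℕ := fun i => d.getD (i % d.length) (0, 0)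

/-- Strict lexicographic order on lists. -/
def listLT (u v : List ℕ) : Prop := List.Lex (· < ·) u v

/-- Weak lexicographic order on lists. -/
def listLE (u v : List ℕ) : Prop := listLT u v ∨ u = v

/-- The first components `d_1¹ … d_k¹` of a block over Ω. -/
def comp1 (d : List (ℕ × ℕ)) : List ℕ := d.map Prod.fst

/-- The second components `d_1² … d_k²` of a block over Ω. -/
def comp2 (d : List (ℕ × ℕ)) : List ℕ := d.map Prod.snd

/-- The digits `(1 - d_1⁺) … (1 - d_k⁺)` where `d⁺ = d¹ + d²`. -/
def comp3 (d : List (ℕ × ℕ)) : List ℕ := d.map fun x => 1 - x.1 - x.2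

/-- Cyclic shift of a list by `j`. -/
def rot {α : Type*} (j : ℕ) (l : List α) : List α := l.drop j ++ l.take j

/-- `d` is a representation of the binary block `a`. -/
def IsRepresentation (a : List ℕ) (d : List (ℕ × ℕ)) : Prop :=
  d.length = a.length ∧ (∀ x ∈ d, x ∈ OmegaD) ∧
  SmallestPeriod (cyc d) a.length ∧
  comp1 d = a ∧ listLE (comp3 d) (comp2 d) ∧ listLE (comp2 d) a ∧
  ∀ j < a.length,
    listLE (comp1 (rot j d)) a ∧ listLE (comp2 (rot j d)) a ∧ listLE (comp3 (rot j d)) a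

/-- A binary block is admissible if it has a representation. -/
def IsAdmissible (a : List ℕ) : Prop := ∃ d, IsRepresentation a d

/-- The `i`-th consecutive triple of a block (0-indexed). -/
def tripleAt (a : List ℕ) (i : ℕ) : List ℕ :=
  [a.getD (3 * i) 0, a.getD (3 * i + 1) 0, a.getD (3 * i + 2) 0]

/-- The edges of the directed graph on {000, 001, 100, 101} defining the subshift `X`. -/
def XEdge (u v : List ℕ) : Prop :=
  (u, v) ∈ ({([1,0,1], [0,0,1]), ([1,0,1], [0,0,0]), ([0,0,1], [0,0,0]),
             ([0,0,0], [1,0,1]), ([0,0,0], [1,0,0]), ([1,0,0], [1,0,1])} :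
      Set (List ℕ × List ℕ))

/-!
In the barycentric coordinates of `Δ_β`, a coding is univoque if and only if, after every occurrence
of a letter, the indicator sequences of the two other letters have value `< 1` in base `β`. As in
Parry's criterion, such conditions become lexicographic bounds on tails of indicator sequences.

If these tails are at most `tripleBound initialBound`, a periodic coding is up to a shift the image
`triple b x` of a binary sequence `x`, with a third of the period, and the conditions on the coding
turn into a bound on the reflected tails of `x`. The Thue–Morse substitution `double` doubles the
smallest period of `x` and replaces the bound `α` by `doubleBound α`, which is strictly smaller
unless `α` is at most the fixed point `thueMorseTail`. That fixed point corresponds to the sequence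
`λ`, hence to `β_c`, and it attracts the iterates of `doubleBound`.

Desubstituting `double` repeatedly shows that a periodic `x` bounded by `thueMorseTail` has a power
of two as a period, so that `β_c` lies below every univoque base for the period
`3 (2 m + 1) 2 ^ n`. A coding that attains the infimum of these bases comes from a binary sequence
not bounded by `thueMorseTail`; doubling that sequence lowers the bound strictly, and with it the
critical base. The codings obtained from `((10)^m 1)^∞` by repeated doubling give the limit.
-/

/-! ### Binary sequences in the lexicographic order -/

section Lexicographic

variable {a b t : ℕ → Bool}

lemma toLex_lt_toLex_iff :
    toLex a < toLex b ↔ ∃ n, (∀ i < n, a i = b i) ∧ a n = false ∧ b n = true := by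
  simp only [← Bool.lt_iff]
  exact Iff.rfl

lemma apply_eq_false_of_toLex_le {n : ℕ} (h : toLex a ≤ toLex b) (hag : ∀ i < n, a i = b i)
    (hb : b n = false) : a n = false := by
  by_contra ha
  exact h.not_gt (toLex_lt_toLex_iff.2
    ⟨n, fun i hi => (hag i hi).symm, hb, Bool.eq_true_of_not_eq_false ha⟩)

lemma eventually_agree {c : ℕ → ℕ → Bool} (hc : Tendsto c atTop (nhds t)) (n : ℕ) :
    ∀ᶠ k in atTop, ∀ i < n, c k i = t i :=
  (eventually_all_finite (finite_lt_nat n)).2 fun i _ => by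
    simpa only [nhds_discrete, tendsto_pure] using tendsto_pi_nhds.1 hc i

lemma toLex_le_of_tendsto {c : ℕ → ℕ → Bool} (hc : Tendsto c atTop (nhds t))
    (h : ∀ n, toLex a ≤ toLex (c n)) : toLex a ≤ toLex t := by
  by_contra hlt
  obtain ⟨n, hag, ht, ha⟩ := toLex_lt_toLex_iff.1 (not_le.1 hlt)
  obtain ⟨k, hk⟩ := (eventually_agree hc (n + 1)).exists
  exact Bool.false_ne_true ((apply_eq_false_of_toLex_le (h k)
    (fun i hi => by rw [hk i (by omega), hag i hi]) (by rw [hk n (by omega), ht])).symm.trans ha)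

lemma toLex_le_const_true (a : ℕ → Bool) : toLex a ≤ toLex fun _ => true :=
  Pi.toLex_monotone fun _ => Bool.le_true _

end Lexicographic

/-- The tail of a sequence from index `n` on. -/
def shift {A : Type*} (n : ℕ) (a : ℕ → A) : ℕ → A := fun i => a (n + i)

/-- The tail of `x` after the index `i`, complemented if `x i = 1`, so that it records where `x`
differs from `x i`. -/
def reflectedTail (x : ℕ → Bool) (i : ℕ) : ℕ → Bool := fun j => xor (x i) (x (i + 1 + j))

/-- The indicator sequence of the letter `j` in a coding `δ` over the three letters `0`, `1`, `2`,
which stand for the digits `(0,0)`, `(1,0)`, `(0,1)`. -/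
def letterIndicator (j : Fin 3) (δ : ℕ → Fin 3) : ℕ → Bool := fun i => decide (δ i = j)

/-- All reflected tails of `x` are lexicographically at most `α`. -/
def ReflectedTailsLE (x α : ℕ → Bool) : Prop := ∀ i, toLex (reflectedTail x i) ≤ toLex α

/-- All tails of all letter indicators of `δ` are lexicographically at most `α`. -/
def LetterTailsLE (δ : ℕ → Fin 3) (α : ℕ → Bool) : Prop :=
  ∀ n j, toLex (shift n (letterIndicator j δ)) ≤ toLex α

/-- The tails of the indicator of the letter `j` that start right after another letter are
lexicographically at most `α`. -/
def ExitTailsLE (δ : ℕ → Fin 3) (α : ℕ → Bool) : Prop :=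
  ∀ n j, δ n ≠ j → toLex (shift (n + 1) (letterIndicator j δ)) ≤ toLex α

@[simp]
lemma shift_apply {A : Type*} (n : ℕ) (a : ℕ → A) (i : ℕ) : shift n a i = a (n + i) := rfl

lemma shift_shift {A : Type*} (m n : ℕ) (a : ℕ → A) : shift m (shift n a) = shift (n + m) a :=
  funext fun i => congrArg a (by rw [add_assoc])

lemma shift_letterIndicator (n : ℕ) (j : Fin 3) (δ : ℕ → Fin 3) :
    shift n (letterIndicator j δ) = letterIndicator j (shift n δ) := rfl

lemma ReflectedTailsLE.mono {x α γ : ℕ → Bool} (h : ReflectedTailsLE x α)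
    (hαγ : toLex α ≤ toLex γ) : ReflectedTailsLE x γ :=
  fun i => (h i).trans hαγ

lemma LetterTailsLE.mono {δ : ℕ → Fin 3} {α γ : ℕ → Bool} (h : LetterTailsLE δ α)
    (hαγ : toLex α ≤ toLex γ) : LetterTailsLE δ γ :=
  fun n j => (h n j).trans hαγ

/-! ### Substitutions -/

/-- The Thue–Morse substitution `0 ↦ 01`, `1 ↦ 10`. -/
def double (x : ℕ → Bool) (n : ℕ) : Bool := xor (decide (n % 2 = 1)) (x (n / 2))

/-- The bound on reflected tails of `double x` that corresponds to the bound `α` on those of `x`: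
the digit `1` followed by `double α`. -/
def doubleBound (α : ℕ → Bool) : ℕ → Bool
  | 0 => true
  | n + 1 => double α n

/-- One of the two letters other than `b`, selected by `c`. -/
def letter (b : Fin 3) (c : Bool) : Fin 3 := bif c then b + 2 else b + 1

/-- The substitution replacing a bit `c` by the three distinct letters
`letter b c`, `letter b (!c)`, `b`. -/
def triple (b : Fin 3) (x : ℕ → Bool) (n : ℕ) : Fin 3 :=
  match n % 3 with
  | 0 => letter b (x (n / 3))
  | 1 => letter b (!x (n / 3))
  | _ => b

/-- The bound on letter tails of `triple b x` that corresponds to the bound `α` on reflected tails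
of `x`: the digit `1` followed by the image of `α` under `0 ↦ 001`, `1 ↦ 010`. -/
def tripleBound (α : ℕ → Bool) : ℕ → Bool
  | 0 => true
  | n + 1 =>
    match n % 3 with
    | 0 => false
    | 1 => α (n / 3)
    | _ => !α (n / 3)

section Substitutions

variable {α γ x : ℕ → Bool}

lemma double_two_mul (x : ℕ → Bool) (i : ℕ) : double x (2 * i) = x i := by
  simp [double]

lemma double_two_mul_add_one (x : ℕ → Bool) (i : ℕ) : double x (2 * i + 1) = !x i := by
  simp [double, Nat.mul_add_div]

lemma doubleBound_zero (α : ℕ → Bool) : doubleBound α 0 = true := rfl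

lemma doubleBound_two_mul_add_one (α : ℕ → Bool) (i : ℕ) : doubleBound α (2 * i + 1) = α i :=
  double_two_mul α i

lemma doubleBound_two_mul_add_two (α : ℕ → Bool) (i : ℕ) : doubleBound α (2 * i + 2) = !α i :=
  double_two_mul_add_one α i

lemma letter_injective (b : Fin 3) : Function.Injective (letter b) := by
  revert b; decide

lemma letter_ne (b : Fin 3) (c : Bool) : letter b c ≠ b := by
  revert b c; decide

lemma exists_letter_eq {a b c : Fin 3} (hab : a ≠ b) (hac : a ≠ c) (hcb : c ≠ b) :
    ∃ e, letter b e = a ∧ letter b (!e) = c := by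
  revert a b c; decide

lemma triple_three_mul (b : Fin 3) (x : ℕ → Bool) (i : ℕ) :
    triple b x (3 * i) = letter b (x i) := by
  simp [triple]

lemma triple_three_mul_add_one (b : Fin 3) (x : ℕ → Bool) (i : ℕ) :
    triple b x (3 * i + 1) = letter b (!x i) := by
  simp [triple, Nat.mul_add_div]

lemma triple_three_mul_add_two (b : Fin 3) (x : ℕ → Bool) (i : ℕ) :
    triple b x (3 * i + 2) = b := by
  simp [triple]

lemma tripleBound_zero (α : ℕ → Bool) : tripleBound α 0 = true := rfl

lemma tripleBound_three_mul_add_one (α : ℕ → Bool) (i : ℕ) :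
    tripleBound α (3 * i + 1) = false := by
  simp [tripleBound]

lemma tripleBound_three_mul_add_two (α : ℕ → Bool) (i : ℕ) :
    tripleBound α (3 * i + 2) = α i := by
  simp [tripleBound, Nat.mul_add_div]

lemma tripleBound_three_mul_add_three (α : ℕ → Bool) (i : ℕ) :
    tripleBound α (3 * i + 3) = !α i := by
  simp [tripleBound, Nat.mul_add_div]

lemma exists_eq_three_mul_add (n : ℕ) :
    ∃ i, n = 3 * i ∨ n = 3 * i + 1 ∨ n = 3 * i + 2 :=
  ⟨n / 3, by omega⟩

lemma doubleBound_agree {n : ℕ} (h : ∀ i < n, α i = γ i) :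
    ∀ i < 2 * n + 1, doubleBound α i = doubleBound γ i := by
  rintro (_ | i) hi
  · rfl
  · simp only [doubleBound, double, h (i / 2) (by omega)]

lemma tripleBound_agree {n : ℕ} (h : ∀ i < n, α i = γ i) :
    ∀ i < 3 * n + 2, tripleBound α i = tripleBound γ i := by
  rintro (_ | i) hi
  · rfl
  obtain ⟨k, rfl | rfl | rfl⟩ := exists_eq_three_mul_add i
  · simp only [tripleBound_three_mul_add_one]
  · simp only [tripleBound_three_mul_add_two, h k (by omega)]
  · simp only [tripleBound_three_mul_add_three, h k (by omega)]

lemma doubleBound_strictMono :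
    StrictMono fun α : Lex (ℕ → Bool) => toLex (doubleBound (ofLex α)) := by
  intro α γ h
  obtain ⟨n, hag, hα, hγ⟩ := (toLex_lt_toLex_iff (a := ofLex α) (b := ofLex γ)).1 h
  exact toLex_lt_toLex_iff.2 ⟨2 * n + 1, doubleBound_agree hag,
    by rw [doubleBound_two_mul_add_one, hα], by rw [doubleBound_two_mul_add_one, hγ]⟩

lemma tripleBound_strictMono :
    StrictMono fun α : Lex (ℕ → Bool) => toLex (tripleBound (ofLex α)) := by
  intro α γ h
  obtain ⟨n, hag, hα, hγ⟩ := (toLex_lt_toLex_iff (a := ofLex α) (b := ofLex γ)).1 h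
  exact toLex_lt_toLex_iff.2 ⟨3 * n + 2, tripleBound_agree hag,
    by rw [tripleBound_three_mul_add_two, hα], by rw [tripleBound_three_mul_add_two, hγ]⟩

lemma doubleBound_le_doubleBound_iff :
    toLex (doubleBound α) ≤ toLex (doubleBound γ) ↔ toLex α ≤ toLex γ :=
  doubleBound_strictMono.le_iff_le (a := toLex α) (b := toLex γ)

lemma tripleBound_lt_tripleBound_iff :
    toLex (tripleBound α) < toLex (tripleBound γ) ↔ toLex α < toLex γ :=
  tripleBound_strictMono.lt_iff_lt (a := toLex α) (b := toLex γ)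

lemma tripleBound_le_tripleBound_iff :
    toLex (tripleBound α) ≤ toLex (tripleBound γ) ↔ toLex α ≤ toLex γ :=
  tripleBound_strictMono.le_iff_le (a := toLex α) (b := toLex γ)

lemma continuous_tripleBound : Continuous tripleBound := by
  refine continuous_pi fun n => ?_
  rcases n with _ | n
  · exact continuous_const
  obtain ⟨k, rfl | rfl | rfl⟩ := exists_eq_three_mul_add n
  · simp only [tripleBound_three_mul_add_one]
    exact continuous_const
  · simp only [tripleBound_three_mul_add_two]
    exact continuous_apply k
  · simp only [tripleBound_three_mul_add_three]
    exact (continuous_of_discreteTopology (f := not)).comp (continuous_apply k)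

lemma reflectedTail_double_two_mul (x : ℕ → Bool) (i : ℕ) :
    reflectedTail (double x) (2 * i) = doubleBound (reflectedTail x i) := by
  funext n
  rcases n with _ | n
  · simp [reflectedTail, doubleBound_zero, double_two_mul, double_two_mul_add_one]
  obtain ⟨k, rfl | rfl⟩ := Nat.even_or_odd' n
  · rw [doubleBound_two_mul_add_one, reflectedTail, reflectedTail, double_two_mul,
      show 2 * i + 1 + (2 * k + 1) = 2 * (i + 1 + k) by ring, double_two_mul]
  · rw [doubleBound_two_mul_add_two, reflectedTail, reflectedTail, double_two_mul,
      show 2 * i + 1 + (2 * k + 1 + 1) = 2 * (i + 1 + k) + 1 by ring, double_two_mul_add_one,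
      Bool.xor_not]

lemma reflectedTailsLE_double (h : ReflectedTailsLE x α) (hα : α 0 = true) :
    ReflectedTailsLE (double x) (doubleBound α) := by
  intro i
  obtain ⟨k, rfl | rfl⟩ := Nat.even_or_odd' i
  · rw [reflectedTail_double_two_mul]
    exact doubleBound_le_doubleBound_iff.2 (h k)
  have head : reflectedTail (double x) (2 * k + 1) 0 = !xor (x k) (x (k + 1)) := by
    rw [reflectedTail, double_two_mul_add_one, show 2 * k + 1 + 1 + 0 = 2 * (k + 1) by ring,
      double_two_mul, Bool.not_xor]
  have next : reflectedTail (double x) (2 * k + 1) 1 = xor (x k) (x (k + 1)) := by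
    rw [reflectedTail, double_two_mul_add_one, show 2 * k + 1 + 1 + 1 = 2 * (k + 1) + 1 by ring,
      double_two_mul_add_one, Bool.not_xor_not]
  refine (toLex_lt_toLex_iff.2 ?_).le
  cases hx : xor (x k) (x (k + 1))
  · refine ⟨1, fun i hi => ?_, next.trans hx, (doubleBound_two_mul_add_one α 0).trans hα⟩
    rw [Nat.lt_one_iff.1 hi, head, hx]
    rfl
  · exact ⟨0, by simp, by rw [head, hx]; rfl, rfl⟩

lemma shift_letterIndicator_triple (b : Fin 3) (x : ℕ → Bool) (i : ℕ) :
    shift (3 * i + 1) (letterIndicator (letter b (!x i)) (triple b x)) =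
      tripleBound (reflectedTail x i) := by
  funext n
  rcases n with _ | n
  · simp [letterIndicator, triple_three_mul_add_one, tripleBound_zero]
  obtain ⟨k, rfl | rfl | rfl⟩ := exists_eq_three_mul_add n
  · rw [tripleBound_three_mul_add_one, shift_apply, letterIndicator,
      show 3 * i + 1 + (3 * k + 1) = 3 * (i + k) + 2 by ring, triple_three_mul_add_two]
    exact decide_eq_false (letter_ne _ _).symm
  · rw [tripleBound_three_mul_add_two, shift_apply, letterIndicator, reflectedTail,
      show 3 * i + 1 + (3 * k + 1 + 1) = 3 * (i + 1 + k) by ring, triple_three_mul]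
    simp only [(letter_injective b).eq_iff]
    cases x i <;> cases x (i + 1 + k) <;> rfl
  · rw [tripleBound_three_mul_add_three, shift_apply, letterIndicator, reflectedTail,
      show 3 * i + 1 + (3 * k + 2 + 1) = 3 * (i + 1 + k) + 1 by ring, triple_three_mul_add_one]
    simp only [(letter_injective b).eq_iff]
    cases x i <;> cases x (i + 1 + k) <;> rfl

lemma shift_letterIndicator_lt_tripleBound {δ : ℕ → Fin 3} {n : ℕ} {j : Fin 3}
    (h₁ : δ (n + 1) ≠ j) (h₂ : δ (n + 2) ≠ j) (hα : α 0 = true) :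
    toLex (shift n (letterIndicator j δ)) < toLex (tripleBound α) := by
  by_cases h₀ : δ n = j
  · refine toLex_lt_toLex_iff.2
      ⟨2, fun i hi => ?_, decide_eq_false h₂, (tripleBound_three_mul_add_two α 0).trans hα⟩
    interval_cases i
    · exact decide_eq_true h₀
    · exact (decide_eq_false h₁).trans (tripleBound_three_mul_add_one α 0).symm
  · exact toLex_lt_toLex_iff.2 ⟨0, by simp, decide_eq_false h₀, rfl⟩

lemma letterTailsLE_triple (h : ReflectedTailsLE x α) (hα : α 0 = true) (b : Fin 3) :
    LetterTailsLE (triple b x) (tripleBound α) := by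
  intro n j
  by_cases hj : triple b x n = j
  swap
  · exact (toLex_lt_toLex_iff.2 ⟨0, by simp, decide_eq_false hj, rfl⟩).le
  subst hj
  obtain ⟨i, rfl | rfl | rfl⟩ := exists_eq_three_mul_add n
  · refine (shift_letterIndicator_lt_tripleBound ?_ ?_ hα).le
    · rw [triple_three_mul_add_one, triple_three_mul]
      exact fun h => Bool.not_ne_self _ (letter_injective b h)
    · rw [triple_three_mul_add_two, triple_three_mul]
      exact (letter_ne _ _).symm
  · rw [triple_three_mul_add_one, shift_letterIndicator_triple]
    exact tripleBound_le_tripleBound_iff.2 (h i)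
  · rw [triple_three_mul_add_two]
    refine (shift_letterIndicator_lt_tripleBound ?_ ?_ hα).le
    · rw [show 3 * i + 2 + 1 = 3 * (i + 1) by ring, triple_three_mul]
      exact letter_ne _ _
    · rw [show 3 * i + 2 + 2 = 3 * (i + 1) + 1 by ring, triple_three_mul_add_one]
      exact letter_ne _ _

end Substitutions

/-! ### The Thue–Morse sequence -/

/-- The Thue–Morse sequence `0110 1001 …`: the parity of the number of binary digits `1`. -/
def thueMorse (n : ℕ) : Bool := n.bits.foldr xor false

/-- The Thue–Morse sequence without its first digit, the fixed point `1101 001 …` of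
`doubleBound`. -/
def thueMorseTail (i : ℕ) : Bool := thueMorse (i + 1)

/-- The sequence `1101^∞`, the largest one not starting with `111`: as a bound on the reflected
tails of a sequence it only forbids runs of three equal digits after a different digit. -/
def initialBound (i : ℕ) : Bool := decide (i ≠ 2)

section ThueMorse

variable {α x : ℕ → Bool}

lemma thueMorse_two_mul (n : ℕ) : thueMorse (2 * n) = thueMorse n := by
  rcases eq_or_ne n 0 with rfl | hn
  · rfl
  · rw [thueMorse, Nat.bit0_bits n hn, List.foldr_cons, Bool.false_xor, thueMorse]

lemma thueMorse_two_mul_add_one (n : ℕ) : thueMorse (2 * n + 1) = !thueMorse n := by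
  rw [thueMorse, Nat.bit1_bits, List.foldr_cons, Bool.true_xor, thueMorse]

lemma double_thueMorse : double thueMorse = thueMorse := by
  funext n
  obtain ⟨k, rfl | rfl⟩ := Nat.even_or_odd' n
  · rw [double_two_mul, thueMorse_two_mul]
  · rw [double_two_mul_add_one, thueMorse_two_mul_add_one]

lemma doubleBound_thueMorseTail : doubleBound thueMorseTail = thueMorseTail := by
  funext n
  rcases n with _ | n
  · rfl
  obtain ⟨k, rfl | rfl⟩ := Nat.even_or_odd' n
  · rw [doubleBound_two_mul_add_one, thueMorseTail, thueMorseTail,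
      show 2 * k + 1 + 1 = 2 * (k + 1) by ring, thueMorse_two_mul]
  · rw [doubleBound_two_mul_add_two, thueMorseTail, thueMorseTail,
      show 2 * k + 1 + 1 + 1 = 2 * (k + 1) + 1 by ring, thueMorse_two_mul_add_one]

lemma iterate_doubleBound_agree (α : ℕ → Bool) (n : ℕ) :
    ∀ i < n, (doubleBound^[n] α) i = thueMorseTail i := by
  induction n with
  | zero => exact fun i hi => absurd hi i.not_lt_zero
  | succ n ih =>
    intro i hi
    rw [Function.iterate_succ_apply', ← doubleBound_thueMorseTail]
    exact doubleBound_agree ih i (by omega)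

lemma tendsto_iterate_doubleBound (α : ℕ → Bool) :
    Tendsto (fun n => doubleBound^[n] α) atTop (nhds thueMorseTail) := by
  refine tendsto_pi_nhds.2 fun i => tendsto_nhds_of_eventually_eq ?_
  filter_upwards [eventually_gt_atTop i] with n hn
  exact iterate_doubleBound_agree α n i hn

lemma iterate_doubleBound_zero (hα : α 0 = true) : ∀ n, (doubleBound^[n] α) 0 = true
  | 0 => hα
  | n + 1 => by rw [Function.iterate_succ_apply', doubleBound_zero]

lemma doubleBound_lt_self (h : toLex thueMorseTail < toLex α) :
    toLex (doubleBound α) < toLex α := by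
  obtain ⟨n, hag, hτ, hα⟩ := toLex_lt_toLex_iff.1 h
  have hτα : ∀ i < 2 * n + 1, doubleBound α i = thueMorseTail i := by
    rw [← doubleBound_thueMorseTail]
    exact doubleBound_agree fun i hi => (hag i hi).symm
  exact toLex_lt_toLex_iff.2
    ⟨n, fun i hi => by rw [hτα i (by omega), hag i hi], by rw [hτα n (by omega), hτ], hα⟩

lemma reflectedTailsLE_thueMorse : ReflectedTailsLE thueMorse thueMorseTail := by
  have iterate : ∀ n, ReflectedTailsLE thueMorse (doubleBound^[n] fun _ => true) := by
    intro n
    induction n with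
    | zero => exact fun i => toLex_le_const_true _
    | succ n ih =>
      rw [Function.iterate_succ_apply', ← double_thueMorse]
      exact reflectedTailsLE_double ih (iterate_doubleBound_zero rfl n)
  exact fun i => toLex_le_of_tendsto (tendsto_iterate_doubleBound _) fun n => iterate n i

lemma shift_tripleBound_thueMorseTail_le (n : ℕ) :
    toLex (shift n (tripleBound thueMorseTail)) ≤ toLex (tripleBound thueMorseTail) := by
  have hτ : thueMorseTail = reflectedTail thueMorse 0 := funext fun i => by
    rw [reflectedTail, Nat.add_comm (0 + 1) i]
    exact (Bool.false_xor _).symm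
  conv_lhs => rw [hτ, ← shift_letterIndicator_triple 0, shift_shift]
  exact letterTailsLE_triple reflectedTailsLE_thueMorse rfl 0 _ _

lemma thueMorseTail_lt_initialBound : toLex thueMorseTail < toLex initialBound :=
  toLex_lt_toLex_iff.2 ⟨4, by decide, by decide, by decide⟩

lemma iterate_doubleBound_initialBound_le (n : ℕ) :
    toLex (doubleBound^[n] initialBound) ≤ toLex initialBound := by
  induction n with
  | zero => exact le_rfl
  | succ n ih =>
    rw [Function.iterate_succ_apply']
    exact (doubleBound_le_doubleBound_iff.2 ih).trans
      (doubleBound_lt_self thueMorseTail_lt_initialBound).le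

end ThueMorse

/-! ### Periods -/

section Periods

open Function (Periodic)

variable {A B : Type*} {d : ℕ → A} {e : ℕ → B} {k : ℕ}

lemma smallestPeriod_iff :
    SmallestPeriod d k ↔ 0 < k ∧ Periodic d k ∧ ∀ j, 0 < j → j < k → ¬ Periodic d j := by
  simp only [SmallestPeriod, Periodic, not_forall, Ne]

lemma SmallestPeriod.periodic (h : SmallestPeriod d k) : Periodic d k := h.2.1

lemma SmallestPeriod.exists_apply_ne_succ (h : SmallestPeriod d k) (hk : 1 < k) :
    ∃ i, d i ≠ d (i + 1) :=
  (h.2.2 1 one_pos hk).imp fun _ => Ne.symm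

lemma smallestPeriod_mul_iff {c : ℕ} (hc : 0 < c)
    (h : ∀ j, Periodic e j ↔ ∃ p, j = c * p ∧ Periodic d p) :
    SmallestPeriod e (c * k) ↔ SmallestPeriod d k := by
  have hp : ∀ p, Periodic e (c * p) ↔ Periodic d p := fun p =>
    (h _).trans ⟨fun ⟨q, hq, hd⟩ => Nat.eq_of_mul_eq_mul_left hc hq ▸ hd, fun hd => ⟨p, rfl, hd⟩⟩
  rw [smallestPeriod_iff, smallestPeriod_iff, hp, Nat.mul_pos_iff_of_pos_left hc]
  refine and_congr_right fun _ => and_congr_right fun _ => ⟨fun hmin p hp0 hpk hdp => ?_, ?_⟩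
  · exact hmin (c * p) (mul_pos hc hp0) (Nat.mul_lt_mul_of_pos_left hpk hc) ((hp p).2 hdp)
  · intro hmin j hj0 hjk hej
    obtain ⟨p, rfl, hdp⟩ := (h j).1 hej
    exact hmin p (Nat.pos_of_mul_pos_left hj0) (Nat.lt_of_mul_lt_mul_left hjk) hdp

lemma periodic_shift_iff (hd : Periodic d k) (hk : 0 < k) (s : ℕ) {p : ℕ} :
    Periodic (shift s d) p ↔ Periodic d p := by
  refine ⟨fun h i => ?_, fun h i => ?_⟩
  · obtain ⟨r, hr⟩ := Nat.exists_eq_add_of_le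
      ((Nat.le_mul_of_pos_right s hk).trans (Nat.le_add_left _ i))
    rw [← hd.nat_mul s, ← hd.nat_mul s i, add_right_comm]
    simpa only [Nat.cast_id, hr, shift_apply, add_assoc] using h r
  · rw [shift_apply, ← add_assoc, h]
    rfl

lemma SmallestPeriod.shift (h : SmallestPeriod d k) (s : ℕ) : SmallestPeriod (shift s d) k := by
  simpa only [smallestPeriod_iff, periodic_shift_iff h.periodic h.1] using h

lemma forall_of_periodic {P : ℕ → Prop} (hP : Periodic P k) (hk : 0 < k)
    (hsucc : ∀ i, P i → P (i + 1)) (h : ∃ i, P i) (i : ℕ) : P i := by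
  obtain ⟨i₀, hi₀⟩ := h
  rw [← hP.nat_mul i₀ i, Nat.cast_id]
  exact Nat.le_induction hi₀ (fun n _ => hsucc n) _
    ((Nat.le_mul_of_pos_right i₀ hk).trans (Nat.le_add_left _ i))

lemma periodic_double_iff {x : ℕ → Bool} {j : ℕ} :
    Periodic (double x) j ↔ ∃ p, j = 2 * p ∧ Periodic x p := by
  constructor
  · intro h
    obtain ⟨p, rfl | rfl⟩ := Nat.even_or_odd' j
    · refine ⟨p, rfl, fun i => ?_⟩
      rw [← double_two_mul x, ← double_two_mul x i, mul_add, h]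
    · exfalso
      have compl : ∀ i, x (i + p) = !x i := fun i => by
        have := h (2 * i)
        rw [show 2 * i + (2 * p + 1) = 2 * (i + p) + 1 by ring, double_two_mul_add_one,
          double_two_mul] at this
        rw [← this, Bool.not_not]
      have const : ∀ i, x (i + p) = x p := by
        intro i
        induction i with
        | zero => rw [zero_add]
        | succ i ih =>
          have := h (2 * i + 1)
          rw [show 2 * i + 1 + (2 * p + 1) = 2 * (i + 1 + p) by ring, double_two_mul_add_one,
            double_two_mul, ← compl] at this
          rw [this, ih]
      exact Bool.not_ne_self (x p) ((compl p).symm.trans (const p))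
  · rintro ⟨p, rfl, hx⟩ i
    obtain ⟨k, rfl | rfl⟩ := Nat.even_or_odd' i
    · rw [← mul_add, double_two_mul, double_two_mul, hx]
    · rw [add_right_comm, ← mul_add, double_two_mul_add_one, double_two_mul_add_one, hx]

lemma periodic_triple_iff {b : Fin 3} {x : ℕ → Bool} {j : ℕ} :
    Periodic (triple b x) j ↔ ∃ p, j = 3 * p ∧ Periodic x p := by
  constructor
  · intro h
    have h2 : triple b x (2 + j) = b := (h 2).trans (triple_three_mul_add_two b x 0)
    obtain ⟨p, rfl | rfl | rfl⟩ := exists_eq_three_mul_add j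
    · refine ⟨p, rfl, fun i => letter_injective b ?_⟩
      rw [← triple_three_mul, ← triple_three_mul, mul_add, h]
    · rw [show 2 + (3 * p + 1) = 3 * (p + 1) by ring, triple_three_mul] at h2
      exact absurd h2 (letter_ne _ _)
    · rw [show 2 + (3 * p + 2) = 3 * (p + 1) + 1 by ring, triple_three_mul_add_one] at h2
      exact absurd h2 (letter_ne _ _)
  · rintro ⟨p, rfl, hx⟩ i
    obtain ⟨k, rfl | rfl | rfl⟩ := exists_eq_three_mul_add i
    · rw [← mul_add, triple_three_mul, triple_three_mul, hx]
    · rw [add_right_comm, ← mul_add, triple_three_mul_add_one, triple_three_mul_add_one, hx]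
    · rw [add_right_comm, ← mul_add, triple_three_mul_add_two, triple_three_mul_add_two]

lemma smallestPeriod_double_iff {x : ℕ → Bool} :
    SmallestPeriod (double x) (2 * k) ↔ SmallestPeriod x k :=
  smallestPeriod_mul_iff two_pos fun _ => periodic_double_iff

lemma smallestPeriod_triple_iff {b : Fin 3} {x : ℕ → Bool} :
    SmallestPeriod (triple b x) (3 * k) ↔ SmallestPeriod x k :=
  smallestPeriod_mul_iff three_pos fun _ => periodic_triple_iff

/-- The sequence `((10)^m 1)^∞`. -/
def oddCycle (m i : ℕ) : Bool := decide (i % (2 * m + 1) % 2 = 0)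

lemma oddCycle_eq_succ {m i : ℕ} (h : oddCycle m i = oddCycle m (i + 1)) :
    i % (2 * m + 1) = 2 * m := by
  by_contra hne
  have hlt : i % (2 * m + 1) < 2 * m + 1 := Nat.mod_lt _ (Nat.succ_pos _)
  have hsucc : (i + 1) % (2 * m + 1) = i % (2 * m + 1) + 1 := by
    rw [Nat.add_mod_eq_add_mod_right 1 (Nat.mod_mod i (2 * m + 1)).symm,
      Nat.mod_eq_of_lt (by omega)]
  rw [oddCycle, oddCycle, hsucc, decide_eq_decide] at h
  omega

lemma smallestPeriod_oddCycle (m : ℕ) : SmallestPeriod (oddCycle m) (2 * m + 1) := by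
  refine smallestPeriod_iff.2 ⟨Nat.succ_pos _, fun i => ?_, fun j hj0 hj h => ?_⟩
  · rw [oddCycle, oddCycle, Nat.add_mod_right]
  have wrap : oddCycle m (2 * m) = oddCycle m (2 * m + 1) := by
    rw [oddCycle, oddCycle, Nat.mod_eq_of_lt (Nat.lt_succ_self _), Nat.mod_self,
      Nat.mul_mod_right]
  rw [← h, ← h (2 * m + 1), add_right_comm] at wrap
  have hmod := oddCycle_eq_succ wrap
  rw [show 2 * m + j = (j - 1) + (2 * m + 1) by omega, Nat.add_mod_right,
    Nat.mod_eq_of_lt (by omega)] at hmod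
  omega

lemma reflectedTailsLE_initialBound {x : ℕ → Bool}
    (h : ∀ i, x i = x (i + 1) → x (i + 1) ≠ x (i + 2)) : ReflectedTailsLE x initialBound := by
  intro i
  by_contra hlt
  obtain ⟨n, hag, hn, ht⟩ := toLex_lt_toLex_iff.1 (not_le.1 hlt)
  obtain rfl : n = 2 := by simpa [initialBound] using hn
  have h0 : xor (x i) (x (i + 1)) = true := (hag 0 (by omega)).symm
  have h1 : xor (x i) (x (i + 2)) = true := (hag 1 (by omega)).symm
  have h2 : xor (x i) (x (i + 3)) = true := ht
  exact h (i + 1) (Bool.xor_right_inj.1 (h0.trans h1.symm))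
    (Bool.xor_right_inj.1 (h1.trans h2.symm))

lemma reflectedTailsLE_oddCycle {m : ℕ} (hm : 1 ≤ m) :
    ReflectedTailsLE (oddCycle m) initialBound := by
  refine reflectedTailsLE_initialBound fun i h₁ h₂ => ?_
  have hi := oddCycle_eq_succ h₁
  have hi' := oddCycle_eq_succ h₂
  rw [Nat.add_mod, hi, Nat.mod_eq_of_lt (show 1 < 2 * m + 1 by omega), Nat.mod_self] at hi'
  omega

lemma exists_smallestPeriod_reflectedTailsLE {m : ℕ} (hm : 1 ≤ m) (n : ℕ) :
    ∃ x, SmallestPeriod x ((2 * m + 1) * 2 ^ n) ∧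
      ReflectedTailsLE x (doubleBound^[n] initialBound) := by
  induction n with
  | zero =>
    exact ⟨oddCycle m, by simpa using smallestPeriod_oddCycle m, reflectedTailsLE_oddCycle hm⟩
  | succ n ih =>
    obtain ⟨x, hx, hxle⟩ := ih
    refine ⟨double x, ?_, ?_⟩
    · rw [pow_succ', mul_left_comm]
      exact smallestPeriod_double_iff.2 hx
    · rw [Function.iterate_succ_apply']
      exact reflectedTailsLE_double hxle (iterate_doubleBound_zero rfl n)

lemma exists_smallestPeriod_letterTailsLE {m : ℕ} (hm : 1 ≤ m) (n : ℕ) :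
    ∃ δ, SmallestPeriod δ (3 * (2 * m + 1) * 2 ^ n) ∧
      LetterTailsLE δ (tripleBound (doubleBound^[n] initialBound)) := by
  obtain ⟨x, hx, hxle⟩ := exists_smallestPeriod_reflectedTailsLE hm n
  refine ⟨triple 0 x, ?_, letterTailsLE_triple hxle (iterate_doubleBound_zero rfl n) 0⟩
  rw [mul_assoc]
  exact smallestPeriod_triple_iff.2 hx

end Periods

/-! ### Desubstitution of periodic sequences -/

section Desubstitution

open Function (Periodic)

variable {x : ℕ → Bool} {δ : ℕ → Fin 3} {k : ℕ}

lemma exists_pairs_ne {i₀ : ℕ} (hne : x i₀ ≠ x (i₀ + 1)) (heq : x (i₀ + 1) = x (i₀ + 2))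
    (hrun : ∀ i, x i ≠ x (i + 1) → x (i + 1) = x (i + 2) → x (i + 2) ≠ x (i + 3) ∧
      (x (i + 3) ≠ x (i + 4) → x (i + 4) ≠ x (i + 5) ∧ x (i + 5) = x (i + 6))) (n : ℕ) :
    x (i₀ + 2 * n) ≠ x (i₀ + 2 * n + 1) := by
  -- A repeated digit marks the boundary of a block of `double`. By `hrun`, successive boundaries
  -- are always two or four indices apart, so all of them have the same parity.
  suffices x (i₀ + 2 * n) ≠ x (i₀ + 2 * n + 1) ∧
      (x (i₀ + 2 * n + 1) = x (i₀ + 2 * n + 2) ∨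
        x (i₀ + 2 * n + 2) ≠ x (i₀ + 2 * n + 3) ∧ x (i₀ + 2 * n + 3) = x (i₀ + 2 * n + 4)) from
    this.1
  induction n with
  | zero => exact ⟨hne, Or.inl heq⟩
  | succ n ih =>
    rw [show i₀ + 2 * (n + 1) = i₀ + 2 * n + 2 by ring]
    obtain ⟨hne, heq | ⟨hne', heq'⟩⟩ := ih
    · obtain ⟨hne', hdouble⟩ := hrun _ hne heq
      exact ⟨hne', or_iff_not_imp_left.2 hdouble⟩
    · exact ⟨hne', Or.inl heq'⟩

lemma runs_of_reflectedTailsLE (h : ReflectedTailsLE x (doubleBound initialBound)) {i : ℕ}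
    (hne : x i ≠ x (i + 1)) (heq : x (i + 1) = x (i + 2)) :
    x (i + 2) ≠ x (i + 3) ∧
      (x (i + 3) ≠ x (i + 4) → x (i + 4) ≠ x (i + 5) ∧ x (i + 5) = x (i + 6)) := by
  have tail (j : ℕ) : reflectedTail x i j = xor (x i) (x (i + (j + 1))) := by
    rw [reflectedTail, add_assoc, add_comm 1 j]
  have h0 : reflectedTail x i 0 = true := by rw [tail]; simpa using hne
  have h1 : reflectedTail x i 1 = true := by rw [tail]; simpa [← heq] using hne
  have h2 : reflectedTail x i 2 = false := apply_eq_false_of_toLex_le (h i)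
    (fun j hj => by interval_cases j <;> assumption) rfl
  have h45 (h3 : reflectedTail x i 3 = true) :
      reflectedTail x i 4 = false ∧ reflectedTail x i 5 = false := by
    have h4 : reflectedTail x i 4 = false := apply_eq_false_of_toLex_le (h i)
      (fun j hj => by interval_cases j <;> assumption) rfl
    exact ⟨h4, apply_eq_false_of_toLex_le (h i)
      (fun j hj => by interval_cases j <;> assumption) rfl⟩
  simp only [tail] at h0 h2 h45
  revert h0 h2 h45 heq
  generalize x i = a, x (i + 1) = b, x (i + 2) = c, x (i + 3) = d
  generalize x (i + 4) = e, x (i + 5) = f, x (i + 6) = g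
  revert a b c d e f g
  decide

lemma exists_shift_eq_double (hx : Periodic x k) (hk : 0 < k) (hnc : ∃ i, x i ≠ x (i + 1))
    (h : ReflectedTailsLE x (doubleBound initialBound)) : ∃ s z, shift s x = double z := by
  have hpairs : ∃ s, ∀ i, x (s + 2 * i) ≠ x (s + 2 * i + 1) := by
    by_cases hrun : ∃ i, x i ≠ x (i + 1) ∧ x (i + 1) = x (i + 2)
    · obtain ⟨i, hne, heq⟩ := hrun
      exact ⟨i, exists_pairs_ne hne heq fun _ => runs_of_reflectedTailsLE h⟩
    · push Not at hrun
      exact ⟨0, fun i => forall_of_periodic (P := fun i => x i ≠ x (i + 1))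
        (fun i => by simp only [add_right_comm i k 1, hx i, hx (i + 1)]) hk hrun hnc _⟩
  obtain ⟨s, hs⟩ := hpairs
  refine ⟨s, fun i => x (s + 2 * i), funext fun n => ?_⟩
  obtain ⟨i, rfl | rfl⟩ := Nat.even_or_odd' n
  · rw [double_two_mul, shift_apply]
  · rw [double_two_mul_add_one, shift_apply, ← add_assoc]
    exact Bool.eq_not.2 (hs i).symm

lemma reflectedTail_shift (s : ℕ) (x : ℕ → Bool) (i : ℕ) :
    reflectedTail (shift s x) i = reflectedTail x (s + i) := funext fun j => by
  simp only [reflectedTail, shift_apply, add_assoc]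

lemma reflectedTailsLE_of_double {α : ℕ → Bool}
    (h : ReflectedTailsLE (double x) (doubleBound α)) : ReflectedTailsLE x α := fun i =>
  doubleBound_le_doubleBound_iff.1 (reflectedTail_double_two_mul x i ▸ h (2 * i))

lemma periodic_of_apply_eq_succ {A : Type*} {d : ℕ → A} (h : ∀ i, d i = d (i + 1)) (p : ℕ) :
    Periodic d p := by
  have const : ∀ i, d i = d 0 := fun i => by
    induction i with
    | zero => rfl
    | succ i ih => rw [← h, ih]
  exact fun i => (const _).trans (const i).symm

lemma exists_halved_of_reflectedTailsLE (hx : Periodic x k) (hk : 0 < k)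
    (hnc : ∃ i, x i ≠ x (i + 1)) (h : ReflectedTailsLE x thueMorseTail) :
    ∃ z p, k = 2 * p ∧ Periodic z p ∧ ReflectedTailsLE z thueMorseTail ∧
      ∀ j, Periodic z j → Periodic x (2 * j) := by
  obtain ⟨s, z, hz⟩ := exists_shift_eq_double hx hk hnc <| h.mono <| by
    rw [← doubleBound_thueMorseTail]
    exact doubleBound_le_doubleBound_iff.2 thueMorseTail_lt_initialBound.le
  obtain ⟨p, hp, hzp⟩ := periodic_double_iff.1 (hz ▸ (periodic_shift_iff hx hk s).2 hx)
  refine ⟨z, p, hp, hzp, reflectedTailsLE_of_double fun i => ?_, fun j hj => ?_⟩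
  · rw [doubleBound_thueMorseTail, ← hz, reflectedTail_shift]
    exact h _
  · rw [← periodic_shift_iff hx hk s, hz]
    exact periodic_double_iff.2 ⟨j, rfl, hj⟩

lemma periodic_two_pow_of_reflectedTailsLE {q : ℕ} (hq : Odd q) {n : ℕ}
    (hx : Periodic x (q * 2 ^ n)) (h : ReflectedTailsLE x thueMorseTail) :
    Periodic x (2 ^ n) := by
  have hk : ∀ n, 0 < q * 2 ^ n := fun n => Nat.mul_pos hq.pos (Nat.two_pow_pos n)
  induction n generalizing x with
  | zero =>
    by_contra hnot
    have hnc : ∃ i, x i ≠ x (i + 1) := by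
      by_contra! hc
      exact hnot (periodic_of_apply_eq_succ hc _)
    obtain ⟨-, p, hp, -⟩ := exists_halved_of_reflectedTailsLE hx (hk 0) hnc h
    exact Nat.not_even_iff_odd.2 hq ⟨p, by omega⟩
  | succ n ih =>
    by_cases hnc : ∃ i, x i ≠ x (i + 1)
    · obtain ⟨z, p, hp, hzp, hzτ, hzx⟩ := exists_halved_of_reflectedTailsLE hx (hk _) hnc h
      obtain rfl : q * 2 ^ n = p := by rw [pow_succ', mul_left_comm] at hp; omega
      exact pow_succ' 2 n ▸ hzx _ (ih hzp hzτ)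
    · push Not at hnc
      exact periodic_of_apply_eq_succ hnc _

lemma not_reflectedTailsLE_thueMorseTail {m n : ℕ} (hm : 1 ≤ m)
    (hx : SmallestPeriod x ((2 * m + 1) * 2 ^ n)) : ¬ ReflectedTailsLE x thueMorseTail := fun h =>
  (smallestPeriod_iff.1 hx).2.2 (2 ^ n) (Nat.two_pow_pos n)
    (lt_mul_of_one_lt_left (Nat.two_pow_pos n) (by omega))
    (periodic_two_pow_of_reflectedTailsLE (odd_two_mul_add_one m) hx.periodic h)

lemma apply_ne_succ_of_exitTailsLE {α : ℕ → Bool} (hδ : SmallestPeriod δ k) (hk : 1 < k)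
    (h : ExitTailsLE δ (tripleBound α)) : ∀ i, δ i ≠ δ (i + 1) := by
  refine forall_of_periodic (P := fun i => δ i ≠ δ (i + 1)) (fun i => ?_) hδ.1 (fun i hi => ?_)
    (hδ.exists_apply_ne_succ hk)
  · simp only [add_right_comm i k 1, hδ.periodic i, hδ.periodic (i + 1)]
  · have head : shift (i + 1) (letterIndicator (δ (i + 1)) δ) 0 = tripleBound α 0 :=
      decide_eq_true rfl
    exact Ne.symm <| of_decide_eq_false <| apply_eq_false_of_toLex_le (n := 1) (h i _ hi)
      (fun j hj => Nat.lt_one_iff.1 hj ▸ head) (tripleBound_three_mul_add_one α 0)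

lemma toLex_shift_le_of_exitTailsLE {α : ℕ → Bool} (hδ : Periodic δ k) (hk : 0 < k)
    (hne : ∀ i, δ i ≠ δ (i + 1)) (h : ExitTailsLE δ α) (n : ℕ) :
    toLex (shift n (letterIndicator (δ n) δ)) ≤ toLex α := by
  have step : ∀ n, toLex (shift (n + 1) (letterIndicator (δ (n + 1)) δ)) ≤ toLex α :=
    fun n => h n _ (hne n)
  have hperiod : shift (n + k) (letterIndicator (δ (n + k)) δ) =
      shift n (letterIndicator (δ n) δ) := funext fun i => by
    simp only [shift_apply, letterIndicator, add_right_comm n k i, hδ _]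
  rw [← hperiod, show n + k = n + k - 1 + 1 by omega]
  exact step _

lemma returns_of_exitTailsLE (hδ : Periodic δ k) (hk : 0 < k) (hne : ∀ i, δ i ≠ δ (i + 1))
    (h : ExitTailsLE δ (tripleBound initialBound)) {q : ℕ} (hq : δ (q + 2) = δ q) :
    δ (q + 4) ≠ δ q ∧ (δ (q + 5) = δ q → δ (q + 7) ≠ δ q ∧ δ (q + 8) ≠ δ q) := by
  set y := shift q (letterIndicator (δ q) δ)
  have hle : toLex y ≤ toLex (tripleBound initialBound) :=
    toLex_shift_le_of_exitTailsLE hδ hk hne h q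
  have hnext {i : ℕ} (hi : y i = true) : y (i + 1) = false :=
    decide_eq_false fun e => hne (q + i) ((of_decide_eq_true hi).trans e.symm)
  have h0 : y 0 = true := decide_eq_true rfl
  have h1 := hnext h0
  have h2 : y 2 = true := decide_eq_true hq
  have h3 := hnext h2
  have h4 : y 4 = false := apply_eq_false_of_toLex_le hle
    (fun j hj => by interval_cases j <;> assumption) rfl
  refine ⟨of_decide_eq_false h4, fun hq5 => ?_⟩
  have h5 : y 5 = true := decide_eq_true hq5
  have h6 := hnext h5
  have h7 : y 7 = false := apply_eq_false_of_toLex_le hle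
    (fun j hj => by interval_cases j <;> assumption) rfl
  have h8 : y 8 = false := apply_eq_false_of_toLex_le hle
    (fun j hj => by interval_cases j <;> assumption) rfl
  exact ⟨of_decide_eq_false h7, of_decide_eq_false h8⟩

lemma eq_of_avoid {a b y z : Fin 3} (hab : a ≠ b) (hya : y ≠ a) (hyb : y ≠ b) (hza : z ≠ a)
    (hzb : z ≠ b) : y = z := by
  revert a b y z; decide

lemma apply_add_four_of_returns (hne : ∀ i, δ i ≠ δ (i + 1))
    (hret : ∀ q, δ (q + 2) = δ q →
      δ (q + 4) ≠ δ q ∧ (δ (q + 5) = δ q → δ (q + 7) ≠ δ q ∧ δ (q + 8) ≠ δ q))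
    {q : ℕ} (hq : δ (q + 2) = δ q) :
    δ (q + 4) = δ (q + 1) ∧
      (δ (q + 5) = δ (q + 3) ∨ δ (q + 7) = δ (q + 1) ∧ δ (q + 8) = δ (q + 6)) := by
  obtain ⟨h40, h78⟩ := hret q hq
  have h30 : δ (q + 3) ≠ δ q := hq ▸ (hne (q + 2)).symm
  have h86 (h50 : δ (q + 5) = δ q) : δ (q + 8) = δ (q + 6) :=
    eq_of_avoid (h78 h50).1.symm (h78 h50).2 (hne (q + 7)).symm
      (h50 ▸ (hne (q + 5)).symm) (hne (q + 6))
  have h64 (h50 : δ (q + 5) = δ q) : δ (q + 6) ≠ δ (q + 4) := fun h =>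
    (hret (q + 4) h).1 ((h86 h50).trans h)
  have h31 : δ (q + 3) ≠ δ (q + 1) := by
    intro h31
    have h41 : δ (q + 4) ≠ δ (q + 1) := h31 ▸ (hne (q + 3)).symm
    obtain ⟨h51, h681⟩ := hret (q + 1) h31
    have h50 : δ (q + 5) = δ q :=
      eq_of_avoid h41 (hne (q + 4)).symm h51 h40.symm (hne q)
    have h61 : δ (q + 6) ≠ δ (q + 1) := fun h => (h681 h).1 ((h86 h50).trans h)
    have h60 : δ (q + 6) = δ q := eq_of_avoid h41 (h64 h50) h61 h40.symm (hne q)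
    exact hne (q + 5) (h50.trans h60.symm)
  have h41 : δ (q + 4) = δ (q + 1) :=
    eq_of_avoid h30.symm h40 (hne (q + 3)).symm (hne q).symm h31.symm
  refine ⟨h41, or_iff_not_imp_left.2 fun h53 => ?_⟩
  have h50 : δ (q + 5) = δ q :=
    eq_of_avoid h31 h53 (h41 ▸ (hne (q + 4)).symm) h30.symm (hne q)
  exact ⟨eq_of_avoid (h50 ▸ hne (q + 5)) (h78 h50).1 (hne (q + 6)).symm (hne q).symm
    (h41 ▸ (h64 h50).symm), h86 h50⟩

lemma exists_apply_add_three_mul_eq (hne : ∀ i, δ i ≠ δ (i + 1))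
    (hret : ∀ q, δ (q + 2) = δ q →
      δ (q + 4) ≠ δ q ∧ (δ (q + 5) = δ q → δ (q + 7) ≠ δ q ∧ δ (q + 8) ≠ δ q)) :
    ∃ s b, ∀ i, δ (s + 3 * i) = b := by
  -- If some letter recurs after two steps, the letter enclosed by these two occurrences appears in
  -- every third place from there on; if none does, `δ` itself has period 3.
  by_cases hq : ∃ q, δ (q + 2) = δ q
  · obtain ⟨q, hq⟩ := hq
    refine ⟨q + 1, δ (q + 1), fun n => ?_⟩
    suffices δ (q + 1 + 3 * n) = δ (q + 1) ∧ (δ (q + 3 * n + 2) = δ (q + 3 * n) ∨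
        δ (q + 3 * n + 4) = δ (q + 1) ∧ δ (q + 3 * n + 5) = δ (q + 3 * n + 3)) from this.1
    induction n with
    | zero => exact ⟨rfl, Or.inl hq⟩
    | succ n ih =>
      rw [show q + 1 + 3 * (n + 1) = q + 3 * n + 4 by ring,
        show q + 3 * (n + 1) = q + 3 * n + 3 by ring]
      rw [show q + 1 + 3 * n = q + 3 * n + 1 by ring] at ih
      obtain ⟨hb, hq | ⟨hb', hq'⟩⟩ := ih
      · simpa only [hb] using apply_add_four_of_returns hne hret hq
      · exact ⟨hb', Or.inl hq'⟩
  · push Not at hq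
    refine ⟨0, δ 0, fun i => ?_⟩
    induction i with
    | zero => rfl
    | succ i ih =>
      rw [← ih]
      exact eq_of_avoid (hne (0 + 3 * i + 1)) (hq _) (hne _).symm (hne _) (hq _).symm

lemma exists_shift_eq_triple (hδ : SmallestPeriod δ k) (hk : 1 < k)
    (h : ExitTailsLE δ (tripleBound initialBound)) : ∃ s b x, shift s δ = triple b x := by
  have hne := apply_ne_succ_of_exitTailsLE hδ hk h
  obtain ⟨s, b, hs⟩ := exists_apply_add_three_mul_eq hne fun _ =>
    returns_of_exitTailsLE hδ.periodic hδ.1 hne h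
  have hsucc (i : ℕ) : δ (s + 3 * i + 3) = b := hs (i + 1)
  choose x hx hx' using fun i => exists_letter_eq (hs i ▸ (hne (s + 3 * i)).symm)
    (hne (s + 3 * i + 1)) (hsucc i ▸ hne (s + 3 * i + 2))
  refine ⟨s + 1, b, x, funext fun n => ?_⟩
  obtain ⟨i, rfl | rfl | rfl⟩ := exists_eq_three_mul_add n
  · rw [triple_three_mul, hx, shift_apply, add_right_comm]
  · rw [triple_three_mul_add_one, hx', shift_apply, ← add_assoc, add_right_comm s]
  · rw [triple_three_mul_add_two, shift_apply, ← add_assoc, add_right_comm s]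
    exact hsucc i

end Desubstitution

/-! ### The sequence `λ` -/

section Lambda

lemma thueMorse_two_pow_add (n : ℕ) : ∀ i < 2 ^ n, thueMorse (2 ^ n + i) = !thueMorse i := by
  induction n with
  | zero =>
    intro i hi
    obtain rfl := Nat.lt_one_iff.1 hi
    rfl
  | succ n ih =>
    intro i hi
    rw [pow_succ'] at hi ⊢
    obtain ⟨c, rfl | rfl⟩ := Nat.even_or_odd' i
    · rw [← mul_add, thueMorse_two_mul, thueMorse_two_mul, ih c (by omega)]
    · rw [← add_assoc, ← mul_add, thueMorse_two_mul_add_one, thueMorse_two_mul_add_one,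
        ih c (by omega)]

lemma tripleBound_thueMorseTail_three_mul (i : ℕ) :
    tripleBound thueMorseTail (3 * i) = thueMorse (2 * i + 1) := by
  rcases i with _ | i
  · rfl
  · rw [mul_add, mul_one, tripleBound_three_mul_add_three, thueMorse_two_mul_add_one,
      thueMorseTail]

lemma tripleBound_thueMorseTail_three_mul_add_two (i : ℕ) :
    tripleBound thueMorseTail (3 * i + 2) = thueMorse (2 * i + 2) := by
  rw [tripleBound_three_mul_add_two, thueMorseTail, ← thueMorse_two_mul, mul_add, mul_one]

lemma tripleBound_thueMorseTail_last (n : ℕ) :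
    tripleBound thueMorseTail (3 * 2 ^ n - 1) = true := by
  have hpos := Nat.two_pow_pos n
  rw [show 3 * 2 ^ n - 1 = 3 * (2 ^ n - 1) + 2 by omega,
    tripleBound_thueMorseTail_three_mul_add_two,
    show 2 * (2 ^ n - 1) + 2 = 2 ^ (n + 1) + 0 by omega,
    thueMorse_two_pow_add _ _ (Nat.two_pow_pos _)]
  rfl

lemma toNat_tripleBound_thueMorseTail_add {n r : ℕ} (hr : r + 1 < 3 * 2 ^ n) :
    (tripleBound thueMorseTail (3 * 2 ^ n + r)).toNat =
      if r % 3 = 1 then (tripleBound thueMorseTail r).toNat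
      else 1 - (tripleBound thueMorseTail r).toNat := by
  have toNat_not (b : Bool) : (!b).toNat = 1 - b.toNat := by cases b <;> rfl
  have hpow : 2 ^ (n + 1) = 2 * 2 ^ n := pow_succ' 2 n
  obtain ⟨c, rfl | rfl | rfl⟩ := exists_eq_three_mul_add r
  · rw [if_neg (by omega), ← mul_add, tripleBound_thueMorseTail_three_mul,
      tripleBound_thueMorseTail_three_mul, mul_add, ← hpow, add_assoc,
      thueMorse_two_pow_add _ _ (by omega), toNat_not]
  · rw [if_pos (by omega), ← add_assoc, ← mul_add, tripleBound_three_mul_add_one,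
      tripleBound_three_mul_add_one]
  · rw [if_neg (by omega), ← add_assoc, ← mul_add, tripleBound_thueMorseTail_three_mul_add_two,
      tripleBound_thueMorseTail_three_mul_add_two, mul_add, ← hpow, add_assoc,
      thueMorse_two_pow_add _ _ (by omega), toNat_not]

lemma length_plusBlock {w : List ℕ} (hw : 0 < w.length) : (plusBlock w).length = w.length := by
  simp only [plusBlock, List.length_append, List.length_dropLast, List.length_singleton]
  omega

lemma getD_plusBlock {w : List ℕ} {i : ℕ} (hi : i + 1 < w.length) :
    (plusBlock w).getD i 0 = w.getD i 0 := by
  have hi' : i < w.dropLast.length := by rw [List.length_dropLast]; omega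
  rw [plusBlock, List.getD_append _ _ _ _ hi', List.getD_eq_getElem _ _ hi',
    List.getD_eq_getElem _ _ (by omega), List.getElem_dropLast]

lemma getD_plusBlock_last (w : List ℕ) : (plusBlock w).getD (w.length - 1) 0 = 1 := by
  rw [plusBlock, List.getD_append_right _ _ _ _ (by rw [List.length_dropLast]),
    List.length_dropLast, Nat.sub_self]
  rfl

lemma getD_thetaBlock {w : List ℕ} {i : ℕ} (hi : i < w.length) :
    (thetaBlock w).getD i 0 = if i % 3 = 1 then w.getD i 0 else 1 - w.getD i 0 := by
  rw [thetaBlock, List.getD_eq_getElem _ _ (by rwa [List.length_mapIdx]), List.getElem_mapIdx,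
    List.getD_eq_getElem _ _ hi]

lemma length_tB (n : ℕ) : (tB n).length = 3 * 2 ^ n := by
  induction n with
  | zero => rfl
  | succ n ih =>
    have hpos : 0 < (tB n).length := ih ▸ Nat.mul_pos three_pos (Nat.two_pow_pos n)
    rw [tB, List.length_append, thetaBlock, List.length_mapIdx, length_plusBlock hpos, ih]
    ring

lemma length_plusBlock_tB (n : ℕ) : (plusBlock (tB n)).length = 3 * 2 ^ n := by
  rw [length_plusBlock (length_tB n ▸ Nat.mul_pos three_pos (Nat.two_pow_pos n)), length_tB]

lemma getD_plusBlock_tB (n : ℕ) :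
    ∀ i < 3 * 2 ^ n, (plusBlock (tB n)).getD i 0 = (tripleBound thueMorseTail i).toNat := by
  induction n with
  | zero => decide
  | succ n ih =>
    intro i hi
    have := pow_succ' 2 n
    obtain hlast | hlast : i = 3 * 2 ^ (n + 1) - 1 ∨ i + 1 < 3 * 2 ^ (n + 1) := by omega
    · rw [hlast, tripleBound_thueMorseTail_last, ← length_tB, getD_plusBlock_last]
      rfl
    rw [getD_plusBlock (length_tB (n + 1) ▸ hlast), tB]
    rcases lt_or_ge i (3 * 2 ^ n) with hleft | hright
    · rw [List.getD_append _ _ _ _ (by rwa [length_plusBlock_tB]), ih i hleft]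
    · obtain ⟨r, rfl⟩ := Nat.exists_eq_add_of_le hright
      rw [List.getD_append_right _ _ _ _ (by rwa [length_plusBlock_tB]), length_plusBlock_tB,
        Nat.add_sub_cancel_left, getD_thetaBlock (by rw [length_plusBlock_tB]; omega),
        ih r (by omega), toNat_tripleBound_thueMorseTail_add (by omega)]

lemma lamSeq_eq_tripleBound (i : ℕ) : lamSeq i = (tripleBound thueMorseTail i).toNat := by
  have hi : i < 3 * 2 ^ i := Nat.lt_two_pow_self.trans_le (Nat.le_mul_of_pos_left _ three_pos)
  rw [lamSeq, tB, List.getD_append _ _ _ _ (by rwa [length_plusBlock_tB]), getD_plusBlock_tB i i hi]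

end Lambda

/-! ### Values of binary expansions -/

/-- The value `∑ aᵢ β^{-i}` of the binary sequence `a` in base `β`. -/
def value (β : ℝ) (a : ℕ → Bool) : ℝ := ∑' i, ((a i).toNat : ℝ) / β ^ (i + 1)

section Value

variable {β β' : ℝ} {a c α : ℕ → Bool}

lemma hasSum_one_div_pow_succ (hβ : 1 < β) :
    HasSum (fun i : ℕ => 1 / β ^ (i + 1)) (1 / (β - 1)) := by
  have hβ0 : β ≠ 0 := by positivity
  have hterm (i : ℕ) : β⁻¹ * β⁻¹ ^ i = 1 / β ^ (i + 1) := by rw [← pow_succ', inv_pow, one_div]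
  have hsum : β⁻¹ * (1 - β⁻¹)⁻¹ = 1 / (β - 1) := by
    rw [← mul_inv, mul_sub, mul_one, mul_inv_cancel₀ hβ0, one_div]
  simpa only [hterm, hsum] using
    (hasSum_geometric_of_lt_one (by positivity) (inv_lt_one_of_one_lt₀ hβ)).mul_left β⁻¹

lemma toNat_div_pow_le (hβ : 1 < β) (e : Bool) (i : ℕ) :
    (e.toNat : ℝ) / β ^ (i + 1) ≤ 1 / β ^ (i + 1) := by
  gcongr
  exact_mod_cast Bool.toNat_le e

lemma summable_value (hβ : 1 < β) (a : ℕ → Bool) :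
    Summable fun i => ((a i).toNat : ℝ) / β ^ (i + 1) :=
  Summable.of_nonneg_of_le (fun i => by positivity) (fun i => toNat_div_pow_le hβ (a i) i)
    (hasSum_one_div_pow_succ hβ).summable

lemma value_nonneg (hβ : 1 < β) (a : ℕ → Bool) : 0 ≤ value β a :=
  tsum_nonneg fun i => by positivity

lemma value_le (hβ : 1 < β) (a : ℕ → Bool) : value β a ≤ 1 / (β - 1) :=
  hasSum_le (fun i => toNat_div_pow_le hβ (a i) i) (summable_value hβ a).hasSum
    (hasSum_one_div_pow_succ hβ)

lemma value_lt_value {i : ℕ} (hβ : 1 < β) (h : a ≤ c) (ha : a i = false) (hc : c i = true) :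
    value β a < value β c := by
  refine Summable.tsum_lt_tsum (i := i) (fun n => ?_) ?_ (summable_value hβ a)
    (summable_value hβ c)
  · gcongr
    exact Bool.toNat_le_toNat (h n)
  · simp only [ha, hc, Bool.toNat_false, Bool.toNat_true, Nat.cast_zero, Nat.cast_one, zero_div]
    positivity

lemma value_eq_sum_range_add (hβ : 1 < β) (a : ℕ → Bool) (n : ℕ) :
    value β a = ∑ i ∈ Finset.range n, ((a i).toNat : ℝ) / β ^ (i + 1) +
      (β ^ n)⁻¹ * value β (shift n a) := by
  rw [value, value, ← (summable_value hβ a).sum_add_tsum_nat_add n, ← tsum_mul_left]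
  congr 1
  refine tsum_congr fun i => ?_
  rw [shift_apply, add_comm n i, ← mul_div_assoc, inv_mul_eq_div, div_div, ← pow_add,
    show n + (i + 1) = i + n + 1 by ring]

lemma mul_value (hβ : 1 < β) (a : ℕ → Bool) :
    β * value β a = (a 0).toNat + value β (shift 1 a) := by
  have hβ0 : β ≠ 0 := by positivity
  rw [value_eq_sum_range_add hβ a 1, Finset.sum_range_one, zero_add, pow_one, mul_add,
    mul_div_cancel₀ _ hβ0, mul_inv_cancel_left₀ hβ0]

lemma value_le_div_mul_value (hβ : 1 < β) (h : β ≤ β') (a : ℕ → Bool) :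
    value β' a ≤ β / β' * value β a := by
  have hβ' : 1 < β' := hβ.trans_le h
  rw [value, value, ← tsum_mul_left]
  refine (summable_value hβ' a).tsum_le_tsum (fun i => ?_) ((summable_value hβ a).mul_left _)
  calc ((a i).toNat : ℝ) / β' ^ (i + 1) ≤ (a i).toNat / (β ^ i * β') := by
        rw [pow_succ]; gcongr
    _ = β / β' * ((a i).toNat / β ^ (i + 1)) := by rw [pow_succ]; field_simp

lemma value_anti (hβ : 1 < β) (h : β ≤ β') (a : ℕ → Bool) : value β' a ≤ value β a :=
  (value_le_div_mul_value hβ h a).trans <|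
    mul_le_of_le_one_left (value_nonneg hβ a) (div_le_one_of_le₀ h (by linarith))

lemma value_lt_one (hβ : 1 < β) (h : β < β') (ha : value β a ≤ 1) : value β' a < 1 :=
  calc value β' a ≤ β / β' * value β a := value_le_div_mul_value hβ h.le a
    _ ≤ β / β' := mul_le_of_le_one_right (div_nonneg (by linarith) (by linarith)) ha
    _ < 1 := (div_lt_one (by linarith)).2 h

lemma continuous_value (hβ : 1 < β) : Continuous (value β) := by
  refine continuous_tsum (fun i => ?_) (hasSum_one_div_pow_succ hβ).summable fun i a => ?_
  · exact (continuous_of_discreteTopology (f := fun e : Bool => (e.toNat : ℝ) / β ^ (i + 1))).comp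
      (continuous_apply i)
  · rw [Real.norm_of_nonneg (by positivity)]
    exact toNat_div_pow_le hβ (a i) i

lemma continuousAt_value (hβ : 1 < β) (a : ℕ → Bool) : ContinuousAt (fun b => value b a) β := by
  obtain ⟨c, hc, hcβ⟩ := exists_between hβ
  have hpos {b : ℝ} (hb : b ∈ Ici c) : 0 < b := by linarith [mem_Ici.1 hb]
  refine ContinuousOn.continuousAt (s := Ici c) ?_ (Ici_mem_nhds hcβ)
  refine continuousOn_tsum (fun i => ?_) (hasSum_one_div_pow_succ hc).summable fun i b hb => ?_
  · exact continuousOn_const.div (continuousOn_pow _) fun b hb => (pow_pos (hpos hb) _).ne'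
  · have := hpos hb
    rw [Real.norm_of_nonneg (by positivity)]
    refine (toNat_div_pow_le (hc.trans_le hb) (a i) i).trans ?_
    gcongr
    exact hb

lemma exists_value_add_le_of_toLex_lt (hβ : 1 < β) (h : toLex a < toLex α) :
    ∃ n, value β a + (β ^ (n + 1))⁻¹ * (1 - value β (shift (n + 1) a)) ≤ value β α := by
  obtain ⟨n, hag, ha, hα⟩ := toLex_lt_toLex_iff.1 h
  refine ⟨n, ?_⟩
  have htail : 0 ≤ (β ^ (n + 1))⁻¹ * value β (shift (n + 1) α) :=
    mul_nonneg (by positivity) (value_nonneg hβ _)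
  rw [value_eq_sum_range_add hβ a (n + 1), value_eq_sum_range_add hβ α (n + 1),
    Finset.sum_range_succ, Finset.sum_range_succ, ha, hα,
    Finset.sum_congr rfl fun i hi => by rw [hag i (Finset.mem_range.1 hi)]]
  simp only [Bool.toNat_false, Bool.toNat_true, Nat.cast_zero, Nat.cast_one, zero_div, one_div]
  linarith

lemma value_shift_le_one (hβ : 1 < β) (hα : value β α ≤ 1)
    (h : ∀ n, toLex (shift n a) ≤ toLex α) (n : ℕ) : value β (shift n a) ≤ 1 := by
  set s := ⨆ n, value β (shift n a)
  have hle : ∀ n, value β (shift n a) ≤ s :=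
    le_ciSup ⟨1 / (β - 1), forall_mem_range.2 fun n => value_le hβ _⟩
  refine (hle n).trans (not_lt.1 fun hs => ?_)
  have hβs : β⁻¹ * (s - 1) < s - 1 :=
    mul_lt_of_lt_one_left (sub_pos.2 hs) (inv_lt_one_of_one_lt₀ hβ)
  -- If the supremum `s` exceeded `1`, each tail would stay below `1` by more than a fixed fraction
  -- of the excess `s - 1`.
  have contraction : ∀ n, value β (shift n a) ≤ 1 + β⁻¹ * (s - 1) := fun n => by
    have hpos : 0 ≤ β⁻¹ * (s - 1) := mul_nonneg (by positivity) (by linarith)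
    rcases (h n).eq_or_lt with heq | hlt
    · rw [toLex.injective heq]
      linarith
    · obtain ⟨t, ht⟩ := exists_value_add_le_of_toLex_lt hβ hlt
      rw [shift_shift] at ht
      have hpow : (β ^ (t + 1))⁻¹ ≤ β⁻¹ :=
        inv_anti₀ (by linarith) (le_self_pow₀ hβ.le t.succ_ne_zero)
      have hstep : (β ^ (t + 1))⁻¹ * (value β (shift (n + (t + 1)) a) - 1) ≤ β⁻¹ * (s - 1) :=
        (mul_le_mul_of_nonneg_left (sub_le_sub_right (hle _) 1) (by positivity)).trans
          (mul_le_mul_of_nonneg_right hpow (by linarith))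
      linarith
  linarith [ciSup_le contraction]

lemma toLex_le_of_value_lt_one (hβ : 1 < β) (hα : value β α = 1)
    (hmax : ∀ n, toLex (shift n α) ≤ toLex α) (ha : value β a < 1) : toLex a ≤ toLex α := by
  by_contra hlt
  obtain ⟨n, hn⟩ := exists_value_add_le_of_toLex_lt hβ (not_le.1 hlt)
  have htail : 0 ≤ (β ^ (n + 1))⁻¹ * (1 - value β (shift (n + 1) α)) :=
    mul_nonneg (by positivity) (sub_nonneg.2 (value_shift_le_one hβ hα.le hmax _))
  linarith

lemma exists_value_le_one_of_toLex_lt {γ : ℕ → Bool} (hβ : 1 < β) (h : toLex γ < toLex α)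
    (hfreq : ∃ᶠ i in atTop, α i = true) (hα : value β α ≤ 1) :
    ∃ b ∈ Ioo 1 β, ∃ c, toLex γ ≤ toLex c ∧ value b c ≤ 1 := by
  obtain ⟨n, hag, hγ, hαn⟩ := toLex_lt_toLex_iff.1 h
  obtain ⟨i, hi, hαi⟩ := frequently_atTop'.1 hfreq n
  -- Truncating `α` strictly lowers its value, which leaves room to decrease the base.
  set c : ℕ → Bool := fun j => α j && decide (j ≤ n)
  have hcα : value β c < 1 := by
    refine (value_lt_value hβ (fun j => Bool.and_le_left _ _) ?_ hαi).trans_le hα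
    exact (congrArg _ (decide_eq_false hi.not_ge)).trans (Bool.and_false _)
  have hev : ∀ᶠ b in nhdsWithin β (Iio β), value b c < 1 ∧ b ∈ Ioo 1 β :=
    (((continuousAt_value hβ c).eventually_lt_const hcα).filter_mono nhdsWithin_le_nhds).and
      (Ioo_mem_nhdsLT hβ)
  obtain ⟨b, hbc, hb⟩ := hev.exists
  refine ⟨b, hb, c, (toLex_lt_toLex_iff.2 ⟨n, fun j hj => ?_, hγ, ?_⟩).le, hbc.le⟩
  · exact (hag j hj).trans (by simp [c, hj.le])
  · simp [c, hαn]

end Value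

/-! ### The overlap region -/

/-- The digits of `Ω`, indexed by the letters. -/
def digit : Fin 3 → ℝ × ℝ := ![(0, 0), (1, 0), (0, 1)]

/-- The point of `S_β` with coding `δ`. -/
def codingPoint (β : ℝ) (δ : ℕ → Fin 3) : ℝ × ℝ := ∑' i, (β ^ (i + 1))⁻¹ • digit (δ i)

/-- The barycentric coordinates of `p` in the triangle `Δ_β`, scaled by `1/(β - 1)` so that they
are the values of the letter indicators when `p` is a coding point. -/
def barycentric (β : ℝ) (p : ℝ × ℝ) : Fin 3 → ℝ := ![1 / (β - 1) - p.1 - p.2, p.1, p.2]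

/-- The coding over `Ω` given by `δ` lies in `𝐔_β`, expressed by the values of the letter
indicators. -/
def IsUnivoque (β : ℝ) (δ : ℕ → Fin 3) : Prop :=
  ∀ n j, δ n ≠ j → value β (shift (n + 1) (letterIndicator j δ)) < 1

section Overlap

variable {β : ℝ} {δ : ℕ → Fin 3} {p : ℝ × ℝ}

lemma digit_injective : Function.Injective digit := by
  intro i j h
  fin_cases i <;> fin_cases j <;> simp_all [digit]

lemma range_digit : range digit = OmegaR := by
  rw [digit, OmegaR, Matrix.range_cons, Matrix.range_cons, Matrix.range_cons, Matrix.range_empty,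
    union_empty, singleton_union, singleton_union]

lemma digit_mem (j : Fin 3) : digit j ∈ OmegaR := range_digit ▸ mem_range_self j

lemma exists_digit_comp_eq {d : ℕ → ℝ × ℝ} (hd : ∀ i, d i ∈ OmegaR) :
    ∃ δ : ℕ → Fin 3, digit ∘ δ = d := by
  simp only [← range_digit, mem_range] at hd
  choose δ hδ using hd
  exact ⟨δ, funext hδ⟩

lemma sum_value_letterIndicator (hβ : 1 < β) (δ : ℕ → Fin 3) :
    ∑ j, value β (letterIndicator j δ) = 1 / (β - 1) := by
  refine (hasSum_sum fun j _ => (summable_value hβ (letterIndicator j δ)).hasSum).unique ?_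
  convert hasSum_one_div_pow_succ hβ using 2 with i
  rw [← Finset.sum_div, ← Nat.cast_sum]
  have : ∀ c : Fin 3, ∑ j, (decide (c = j)).toNat = 1 := by decide
  simp only [letterIndicator, this, Nat.cast_one]

lemma codingPoint_eq (hβ : 1 < β) (δ : ℕ → Fin 3) :
    codingPoint β δ = (value β (letterIndicator 1 δ), value β (letterIndicator 2 δ)) := by
  refine HasSum.tsum_eq ?_
  refine ((summable_value hβ (letterIndicator 1 δ)).hasSum.prodMk
    (summable_value hβ (letterIndicator 2 δ)).hasSum).congr_fun fun i => ?_
  simp only [letterIndicator]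
  generalize δ i = c
  fin_cases c <;> simp [digit]

lemma barycentric_codingPoint (hβ : 1 < β) (δ : ℕ → Fin 3) (j : Fin 3) :
    barycentric β (codingPoint β δ) j = value β (letterIndicator j δ) := by
  have hsum := sum_value_letterIndicator hβ δ
  rw [Fin.sum_univ_three] at hsum
  rw [codingPoint_eq hβ, barycentric]
  fin_cases j
  · exact show 1 / (β - 1) - value β (letterIndicator 1 δ) - value β (letterIndicator 2 δ) =
      value β (letterIndicator 0 δ) by linarith
  · rfl
  · rfl

lemma barycentric_smul_sub_digit (hβ : 1 < β) (p : ℝ × ℝ) (i j : Fin 3) :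
    barycentric β (β • p - digit i) j = β * barycentric β p j - if i = j then 1 else 0 := by
  have hβ1 : β - 1 ≠ 0 := by linarith
  fin_cases i <;> fin_cases j <;> simp [barycentric, digit] <;> field_simp <;> ring

lemma sum_barycentric (β : ℝ) (p : ℝ × ℝ) : ∑ j, barycentric β p j = 1 / (β - 1) := by
  simp only [Fin.sum_univ_three, barycentric, Matrix.cons_val]
  ring

lemma convex_setOf_barycentric_nonneg (β : ℝ) : Convex ℝ {p | ∀ j, 0 ≤ barycentric β p j} := by
  intro p hp q hq s t hs ht hst j
  have haffine : barycentric β (s • p + t • q) j =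
      s * barycentric β p j + t * barycentric β q j := by
    obtain rfl : t = 1 - s := by linarith
    fin_cases j <;> simp [barycentric]
    ring
  rw [haffine]
  exact add_nonneg (mul_nonneg hs (hp j)) (mul_nonneg ht (hq j))

lemma codingPoint_const (hβ : 1 < β) (j : Fin 3) :
    codingPoint β (fun _ => j) = (1 / (β - 1)) • digit j := by
  simp only [codingPoint, ← one_div]
  exact ((hasSum_one_div_pow_succ hβ).smul_const (digit j)).tsum_eq

lemma codingPoint_mem_Delta (β : ℝ) (δ : ℕ → Fin 3) : codingPoint β δ ∈ Delta β :=
  subset_convexHull ℝ _ ⟨digit ∘ δ, fun i => digit_mem (δ i), rfl⟩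

lemma mem_Delta_iff (hβ : 1 < β) : p ∈ Delta β ↔ ∀ j, 0 ≤ barycentric β p j := by
  constructor
  · refine fun hp => convexHull_min ?_ (convex_setOf_barycentric_nonneg β) hp
    rintro _ ⟨d, hd, rfl⟩ j
    obtain ⟨δ, rfl⟩ := exists_digit_comp_eq hd
    exact (value_nonneg hβ _).trans_eq (barycentric_codingPoint hβ δ j).symm
  · intro hp
    have hβ1 : 0 < β - 1 := by linarith
    have hvertex : ∀ j, (1 / (β - 1)) • digit j ∈ Delta β := fun j =>
      codingPoint_const hβ j ▸ codingPoint_mem_Delta β _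
    have hcombo : ∑ j, ((β - 1) * barycentric β p j) • (1 / (β - 1)) • digit j = p := by
      ext <;> simp [Fin.sum_univ_three, digit, barycentric] <;> field_simp
    rw [← hcombo]
    refine (convex_convexHull ℝ _).sum_mem (fun j _ => mul_nonneg hβ1.le (hp j)) ?_
      fun j _ => hvertex j
    rw [← Finset.mul_sum, sum_barycentric, mul_one_div_cancel hβ1.ne']

lemma mem_fmap_digit_image_iff (hβ : 1 < β) (hp : p ∈ Delta β) (i : Fin 3) :
    p ∈ fmap β (digit i) '' Delta β ↔ 1 ≤ β * barycentric β p i := by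
  have hβ0 : β ≠ 0 := by positivity
  have hpre : p ∈ fmap β (digit i) '' Delta β ↔ β • p - digit i ∈ Delta β := by
    refine ⟨?_, fun h => ⟨_, h, ?_⟩⟩
    · rintro ⟨q, hq, rfl⟩
      rwa [fmap, smul_inv_smul₀ hβ0, add_sub_cancel_right]
    · rw [fmap, sub_add_cancel, inv_smul_smul₀ hβ0]
  simp only [hpre, mem_Delta_iff hβ, barycentric_smul_sub_digit hβ, sub_nonneg]
  refine ⟨fun h => by simpa using h i, fun h j => ?_⟩
  split_ifs with hij
  · exact hij ▸ h
  · exact mul_nonneg (by linarith) ((mem_Delta_iff hβ).1 hp j)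

lemma codingPoint_mem_fmap_digit_image_iff (hβ : 1 < β) (δ : ℕ → Fin 3) (j : Fin 3) :
    codingPoint β δ ∈ fmap β (digit j) '' Delta β ↔
      δ 0 = j ∨ 1 ≤ value β (shift 1 (letterIndicator j δ)) := by
  have htail := value_nonneg hβ (shift 1 (letterIndicator j δ))
  rw [mem_fmap_digit_image_iff hβ (codingPoint_mem_Delta β δ), barycentric_codingPoint hβ,
    mul_value hβ, letterIndicator]
  by_cases hj : δ 0 = j
  · simpa [hj] using htail
  · simp [hj]

lemma codingPoint_mem_Ofat_iff (hβ : 1 < β) (δ : ℕ → Fin 3) :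
    codingPoint β δ ∈ Ofat β ↔ ∃ j, δ 0 ≠ j ∧ 1 ≤ value β (shift 1 (letterIndicator j δ)) := by
  simp only [Ofat, ← range_digit, biUnion_range, mem_iUnion, mem_inter_iff, exists_prop,
    codingPoint_mem_fmap_digit_image_iff hβ, digit_injective.ne_iff]
  constructor
  · rintro ⟨i, j, hij, hi, hj⟩
    rcases eq_or_ne (δ 0) i with rfl | hne
    · exact ⟨j, hij, hj.resolve_left hij⟩
    · exact ⟨i, hne, hi.resolve_left hne⟩
  · rintro ⟨j, hj, hval⟩
    exact ⟨δ 0, j, hj, Or.inl rfl, Or.inr hval⟩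

lemma digit_comp_mem_Ufat_iff (hβ : 1 < β) : digit ∘ δ ∈ Ufat β ↔ IsUnivoque β δ := by
  have hmem (n : ℕ) : ∑' i : ℕ, (β ^ (i + 1))⁻¹ • (digit ∘ δ) (n + i) ∈ Ofat β ↔
      ∃ j, δ n ≠ j ∧ 1 ≤ value β (shift (n + 1) (letterIndicator j δ)) := by
    have h := codingPoint_mem_Ofat_iff hβ (shift n δ)
    simp only [← shift_letterIndicator, shift_shift] at h
    exact h
  simp only [Ufat, mem_ofPred_eq, hmem, IsUnivoque, not_exists, not_and, not_le]
  exact and_iff_right fun i => digit_mem (δ i)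

lemma smallestPeriod_digit_comp_iff {k : ℕ} :
    SmallestPeriod (digit ∘ δ) k ↔ SmallestPeriod δ k := by
  simp only [SmallestPeriod, Function.comp_apply, digit_injective.eq_iff, digit_injective.ne_iff]

end Overlap

/-! ### Critical bases -/

/-- The bases in `(1, 2]` in which some coding of smallest period `k` is univoque; `betaK k` is
their infimum. -/
def univoqueBases (k : ℕ) : Set ℝ :=
  {β | β ∈ Ioc (1 : ℝ) 2 ∧ ∃ δ, SmallestPeriod δ k ∧ IsUnivoque β δ}

section CriticalBases

open Function (Periodic)

variable {β b : ℝ} {k m n : ℕ} {δ : ℕ → Fin 3} {x α γ : ℕ → Bool}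

lemma betaK_eq_sInf (k : ℕ) : betaK k = sInf (univoqueBases k) := by
  rw [betaK]
  congr 1
  ext β
  refine and_congr_right fun hβ => ⟨?_, ?_⟩
  · rintro ⟨d, hd, hk⟩
    obtain ⟨δ, rfl⟩ := exists_digit_comp_eq hd.1
    exact ⟨δ, smallestPeriod_digit_comp_iff.1 hk, (digit_comp_mem_Ufat_iff hβ.1).1 hd⟩
  · rintro ⟨δ, hk, hδ⟩
    exact ⟨digit ∘ δ, (digit_comp_mem_Ufat_iff hβ.1).2 hδ, smallestPeriod_digit_comp_iff.2 hk⟩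

lemma betaK_le (hβ : β ∈ univoqueBases k) : betaK k ≤ β :=
  betaK_eq_sInf k ▸ csInf_le ⟨1, fun _ h => h.1.1.le⟩ hβ

lemma LetterTailsLE.isUnivoque (h : LetterTailsLE δ α) (hb : 1 < b) (hbβ : b < β)
    (hα : value b α ≤ 1) : IsUnivoque β δ :=
  fun n j _ => value_lt_one hb hbβ (value_shift_le_one hb hα (fun n => h n j) (n + 1))

lemma exists_mem_univoqueBases_lt (hδ : SmallestPeriod δ k) (hle : LetterTailsLE δ γ)
    (hγα : toLex γ < toLex α) (hfreq : ∃ᶠ i in atTop, α i = true) (hb : b ∈ Ioc (1 : ℝ) 2)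
    (hα : value b α ≤ 1) : ∃ β ∈ univoqueBases k, β < b := by
  obtain ⟨b', ⟨hb', hb'b⟩, c, hγc, hc⟩ := exists_value_le_one_of_toLex_lt hb.1 hγα hfreq hα
  obtain ⟨β, hb'β, hβb⟩ := exists_between hb'b
  exact ⟨β, ⟨⟨hb'.trans hb'β, hβb.le.trans hb.2⟩, δ, hδ,
    (hle.mono hγc).isUnivoque hb' hb'β hc⟩, hβb⟩

lemma exists_mem_univoqueBases_lt_two (hm : 1 ≤ m) (n : ℕ) :
    ∃ β ∈ univoqueBases (3 * (2 * m + 1) * 2 ^ n), β < 2 := by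
  obtain ⟨δ, hδ, hle⟩ := exists_smallestPeriod_letterTailsLE hm n
  refine exists_mem_univoqueBases_lt (α := fun _ => true) hδ hle ?_ (.of_forall fun _ => rfl)
    (right_mem_Ioc.2 one_lt_two) ((value_le one_lt_two _).trans_eq (by norm_num))
  exact (toLex_le_const_true _).lt_of_ne fun h =>
    Bool.false_ne_true (congrFun (toLex.injective h) 1)

lemma exists_shift_letterIndicator_eq {s : ℕ} {c : Fin 3} (h : shift s δ = triple c x) (i : ℕ) :
    ∃ n j, δ n ≠ j ∧ shift (n + 1) (letterIndicator j δ) = tripleBound (reflectedTail x i) := by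
  refine ⟨s + 3 * i, letter c (!x i), fun hn => ?_, ?_⟩
  · rw [← shift_apply s δ, h, triple_three_mul] at hn
    exact Bool.not_ne_self _ (letter_injective c hn).symm
  · rw [← shift_letterIndicator_triple c, ← h, ← shift_letterIndicator, shift_shift, add_assoc]

lemma exists_smallestPeriod_reflectedTail_of_exitTailsLE (hδ : SmallestPeriod δ (3 * k))
    (h : ExitTailsLE δ (tripleBound initialBound)) :
    ∃ x, SmallestPeriod x k ∧ ∀ i, ∃ n j, δ n ≠ j ∧
      shift (n + 1) (letterIndicator j δ) = tripleBound (reflectedTail x i) := by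
  obtain ⟨s, c, x, hx⟩ := exists_shift_eq_triple hδ (by have := hδ.1; omega) h
  exact ⟨x, smallestPeriod_triple_iff.1 (hx ▸ hδ.shift s), exists_shift_letterIndicator_eq hx⟩

lemma IsBetaC.value_eq (hb : IsBetaC b) : value b (tripleBound thueMorseTail) = 1 := by
  simpa only [SumsToOne, lamSeq_eq_tripleBound, value] using hb.2

lemma IsBetaC.lt_of_mem_univoqueBases (hb : IsBetaC b) (hm : 1 ≤ m)
    (hβ : β ∈ univoqueBases (3 * (2 * m + 1) * 2 ^ n)) : b < β := by
  obtain ⟨⟨hβ1, -⟩, δ, hδ, hu⟩ := hβ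
  by_contra! hβb
  have hexit : ExitTailsLE δ (tripleBound thueMorseTail) := fun n j hj =>
    toLex_le_of_value_lt_one hb.1.1 hb.value_eq shift_tripleBound_thueMorseTail_le
      ((value_anti hβ1 hβb _).trans_lt (hu n j hj))
  rw [mul_assoc] at hδ
  obtain ⟨x, hx, hx'⟩ := exists_smallestPeriod_reflectedTail_of_exitTailsLE hδ fun n j hj =>
    (hexit n j hj).trans (tripleBound_le_tripleBound_iff.2 thueMorseTail_lt_initialBound.le)
  refine not_reflectedTailsLE_thueMorseTail hm hx fun i => ?_
  obtain ⟨n, j, hj, heq⟩ := hx' i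
  exact tripleBound_le_tripleBound_iff.1 (heq ▸ hexit n j hj)

lemma IsBetaC.le_betaK (hb : IsBetaC b) (hm : 1 ≤ m) (n : ℕ) :
    b ≤ betaK (3 * (2 * m + 1) * 2 ^ n) := by
  obtain ⟨β, hβ, -⟩ := exists_mem_univoqueBases_lt_two hm n
  exact betaK_eq_sInf _ ▸ le_csInf ⟨β, hβ⟩ fun _ h => (hb.lt_of_mem_univoqueBases hm h).le

lemma finite_setOf_periodic {A : Type*} [Finite A] (hk : 0 < k) :
    {d : ℕ → A | Periodic d k}.Finite := by
  refine Finite.of_injOn (f := fun d (i : Fin k) => d i) (mapsTo_univ _ _) ?_ finite_univ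
  intro d hd e he hde
  funext i
  rw [← hd.map_mod_nat, ← he.map_mod_nat]
  exact congrFun hde ⟨i % k, Nat.mod_lt i hk⟩

lemma exists_frequently_eq {A : Type*} {S : Set A} (hS : S.Finite) {u : ℕ → A}
    (hu : ∀ n, u n ∈ S) : ∃ a, ∃ᶠ n in atTop, u n = a := by
  by_contra! h
  obtain ⟨n, hn⟩ := ((eventually_all_finite hS).2 fun a _ => h a).exists
  exact hn (u n) (hu n) rfl

lemma exists_value_betaK_le_one (hne : (univoqueBases k).Nonempty) (h1 : 1 < betaK k) :
    ∃ δ, SmallestPeriod δ k ∧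
      ∀ n j, δ n ≠ j → value (betaK k) (shift (n + 1) (letterIndicator j δ)) ≤ 1 := by
  obtain ⟨u, -, hu, hmem⟩ := exists_seq_tendsto_sInf hne ⟨1, fun _ h => h.1.1.le⟩
  rw [← betaK_eq_sInf] at hu
  choose _ c hc huniv using hmem
  obtain ⟨δ, hδ⟩ := exists_frequently_eq (finite_setOf_periodic (hc 0).1) fun i => (hc i).periodic
  obtain ⟨i, rfl⟩ := hδ.exists
  refine ⟨c i, hc i, fun n j hj => ?_⟩
  refine le_of_tendsto_of_frequently ((continuousAt_value h1 _).tendsto.comp hu)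
    (hδ.mono fun l hl => ?_)
  exact (hl ▸ huniv l n j (hl ▸ hj)).le

lemma exists_reflectedTailsLE_reflectedTail (hx : SmallestPeriod x k) (hk : 1 < k) :
    ∃ i, reflectedTail x i 0 = true ∧ ReflectedTailsLE x (reflectedTail x i) := by
  have hper : Periodic (reflectedTail x) k := fun i => funext fun l => by
    simp only [reflectedTail, add_right_comm i k, add_right_comm _ k l, hx.periodic _]
  obtain ⟨i₀, -, hmax⟩ := (Finset.range k).exists_max_image (fun i => toLex (reflectedTail x i))
    ⟨0, Finset.mem_range.2 hx.1⟩
  have hle : ReflectedTailsLE x (reflectedTail x i₀) := fun i => by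
    rw [← hper.map_mod_nat]
    exact hmax _ (Finset.mem_range.2 (Nat.mod_lt i hx.1))
  refine ⟨i₀, ?_, hle⟩
  obtain ⟨i, hi⟩ := hx.exists_apply_ne_succ hk
  by_contra h0
  have hflat : reflectedTail x i 0 = false :=
    apply_eq_false_of_toLex_le (hle i) (by simp) (Bool.eq_false_of_not_eq_true h0)
  exact hi (bne_eq_false_iff_eq.1 hflat)

lemma frequently_tripleBound_eq_true (α : ℕ → Bool) : ∃ᶠ i in atTop, tripleBound α i = true := by
  refine frequently_atTop.2 fun n => ?_
  cases h : α n
  · exact ⟨3 * n + 3, by omega, by rw [tripleBound_three_mul_add_three, h, Bool.not_false]⟩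
  · exact ⟨3 * n + 2, by omega, by rw [tripleBound_three_mul_add_two, h]⟩

lemma frequently_eq_of_periodic {A : Type*} {d : ℕ → A} (hd : Periodic d k) (hk : 0 < k) (i : ℕ) :
    ∃ᶠ l in atTop, d l = d i := by
  refine frequently_atTop.2 fun n => ⟨i + n * k, ?_, hd.nat_mul n i⟩
  exact (Nat.le_mul_of_pos_right n hk).trans (Nat.le_add_left _ i)

lemma exists_mem_univoqueBases_double_lt (hx : SmallestPeriod x k) (hk : 1 < k)
    (hτ : ¬ ReflectedTailsLE x thueMorseTail) (hb : b ∈ Ioc (1 : ℝ) 2)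
    (hval : ∀ i, value b (tripleBound (reflectedTail x i)) ≤ 1) :
    ∃ β ∈ univoqueBases (3 * (2 * k)), β < b := by
  obtain ⟨i, hhead, hmax⟩ := exists_reflectedTailsLE_reflectedTail hx hk
  have hlt : toLex (doubleBound (reflectedTail x i)) < toLex (reflectedTail x i) :=
    doubleBound_lt_self (not_le.1 fun hle => hτ (hmax.mono hle))
  exact exists_mem_univoqueBases_lt
    (smallestPeriod_triple_iff.2 (smallestPeriod_double_iff.2 hx))
    (letterTailsLE_triple (reflectedTailsLE_double hmax hhead) (doubleBound_zero _) 0)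
    (tripleBound_lt_tripleBound_iff.2 hlt) (frequently_tripleBound_eq_true _) hb (hval i)

lemma exitTailsLE_of_value_betaK_le_one (hδ : SmallestPeriod δ k)
    (hval : ∀ n j, δ n ≠ j → value (betaK k) (shift (n + 1) (letterIndicator j δ)) ≤ 1)
    (hb : betaK k ∈ Ioc (1 : ℝ) 2) {ε : ℕ → Fin 3} (hε : SmallestPeriod ε k)
    (hle : LetterTailsLE ε α) : ExitTailsLE δ α := by
  intro n j hj
  by_contra hlt
  obtain ⟨i, -, -, hi⟩ := toLex_lt_toLex_iff.1 (not_le.1 hlt)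
  have hper : Periodic (shift (n + 1) (letterIndicator j δ)) k := fun l => by
    simp only [shift_apply, letterIndicator, ← add_assoc, hδ.periodic _]
  have hfreq := frequently_eq_of_periodic hper hδ.1 i
  simp only [hi] at hfreq
  obtain ⟨β, hβ, hβb⟩ := exists_mem_univoqueBases_lt hε hle (not_le.1 hlt) hfreq hb (hval n j hj)
  exact (betaK_le hβ).not_gt hβb

lemma IsBetaC.betaK_succ_lt (hb : IsBetaC b) (hm : 1 ≤ m) (n : ℕ) :
    betaK (3 * (2 * m + 1) * 2 ^ (n + 1)) < betaK (3 * (2 * m + 1) * 2 ^ n) := by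
  obtain ⟨β₀, hβ₀, hβ₀2⟩ := exists_mem_univoqueBases_lt_two hm n
  have hbk : betaK (3 * (2 * m + 1) * 2 ^ n) ∈ Ioc (1 : ℝ) 2 :=
    ⟨hb.1.1.trans_le (hb.le_betaK hm n), (betaK_le hβ₀).trans hβ₀2.le⟩
  obtain ⟨δ, hδ, hval⟩ := exists_value_betaK_le_one ⟨β₀, hβ₀⟩ hbk.1
  obtain ⟨ε, hε, hεle⟩ := exists_smallestPeriod_letterTailsLE hm n
  have hexit : ExitTailsLE δ (tripleBound initialBound) :=
    exitTailsLE_of_value_betaK_le_one hδ hval hbk hε <| hεle.mono <|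
      tripleBound_le_tripleBound_iff.2 (iterate_doubleBound_initialBound_le n)
  obtain ⟨x, hx, hx'⟩ := exists_smallestPeriod_reflectedTail_of_exitTailsLE
    (by rwa [mul_assoc] at hδ) hexit
  obtain ⟨β, hβ, hβb⟩ := exists_mem_univoqueBases_double_lt hx
    (one_lt_mul_of_lt_of_le (by omega) Nat.one_le_two_pow)
    (not_reflectedTailsLE_thueMorseTail hm hx) hbk fun i => by
      obtain ⟨n, j, hj, heq⟩ := hx' i
      exact heq ▸ hval n j hj
  rw [show 3 * (2 * m + 1) * 2 ^ (n + 1) = 3 * (2 * ((2 * m + 1) * 2 ^ n)) by ring]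
  exact (betaK_le hβ).trans_lt hβb

lemma IsBetaC.eventually_betaK_lt (hb : IsBetaC b) (hm : 1 ≤ m) {a : ℝ} (ha : b < a) :
    ∀ᶠ n in atTop, betaK (3 * (2 * m + 1) * 2 ^ n) < a := by
  obtain ⟨β₀, hβ₀, hβ₀2⟩ := exists_mem_univoqueBases_lt_two hm 0
  have hb2 : b < 2 := (hb.lt_of_mem_univoqueBases hm hβ₀).trans hβ₀2
  obtain ⟨c, hbc, hc⟩ := exists_between (lt_min ha hb2)
  obtain ⟨β, hcβ, hβ⟩ := exists_between hc
  have hc1 : 1 < c := hb.1.1.trans hbc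
  have hlim : Tendsto (fun n => value c (tripleBound (doubleBound^[n] initialBound))) atTop
      (nhds (value c (tripleBound thueMorseTail))) :=
    (((continuous_value hc1).comp continuous_tripleBound).tendsto _).comp
      (tendsto_iterate_doubleBound initialBound)
  filter_upwards [hlim.eventually_lt_const (value_lt_one hb.1.1 hbc hb.value_eq.le)] with n hn
  obtain ⟨δ, hδ, hle⟩ := exists_smallestPeriod_letterTailsLE hm n
  exact (betaK_le ⟨⟨hc1.trans hcβ, (hβ.trans_le (min_le_right _ _)).le⟩, δ, hδ,
    hle.isUnivoque hc1 hcβ hn.le⟩).trans_lt (hβ.trans_le (min_le_left _ _))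

end CriticalBases

/-- For fixed m ≥ 1, the sequence n ↦ β_{3(2m+1)2ⁿ} is strictly decreasing
and converges to β_c. -/
theorem stmt9 (m : ℕ) (hm : 1 ≤ m) (bc : ℝ) (hbc : FatSierpinski.IsBetaC bc) :
    StrictAnti (fun n : ℕ => FatSierpinski.betaK (3 * (2 * m + 1) * 2 ^ n)) ∧
    Filter.Tendsto (fun n : ℕ => FatSierpinski.betaK (3 * (2 * m + 1) * 2 ^ n))
      Filter.atTop (nhds bc) :=
  ⟨strictAnti_nat_of_succ_lt (hbc.betaK_succ_lt hm), tendsto_order.2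
    ⟨fun _ ha => .of_forall fun n => ha.trans_le (hbc.le_betaK hm n),
      fun _ ha => hbc.eventually_betaK_lt hm ha⟩⟩

end FatSierpinski
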